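/- arXiv:2101.01680 — 3 statements merged into one kernel-verified Lean document; each statement's English description precedes it below -/
import Mathlib

section
/- For every α ∈ (0,2), the function ρ_α has exactly one zero θ₀(α) in the open interval (t₀(α), min(π, πα)); in particular θ₀(α) = t₀(α) + Δt(α) with Δt(α) > 0. -/
open MeasureTheory Set

/-- `t₀(α) = 2πα/(α+2)`. -/
noncomputable def t0 (α : ℝ) : ℝ := 2 * Real.pi * α / (α + 2)

/-- `Z₀(θ) = (sin t₀(α) / sin θ)^(1/α)`. -/
noncomputable def Z0 (α θ : ℝ) : ℝ := (Real.sin (t0 α) / Real.sin θ) ^ (1 / α)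

/-!
Parametrise `ρ_α` by the rays at angle `φ = θ / α`, with `a = t₀(α)`, and let `R` be the integral of
`√(e^{ia} - w^α)` along such a ray up to the point where `Im w^α = sin a`. There the branch required
of `g` is `-i √(e^{ia} - w^α)`, so that `ρ_α(θ) = Im R - 2 C sin φ = sin φ (q(θ) - 2 C)` with
`q = Im R / sin φ` and `C = ∫₀¹ √(1 - ξ^α) dξ`.

Let `L` be the length of the ray and `S > 0` the value of `e^{ia} - w^α` at its end. As
`F = e^{iφ} R = ∫ √(e^{ia} - w^α) dw` depends on `θ` through the end point alone,
`F' = (1/α) e^{iφ} (i - cot θ) L √S`. Hence `q'` is a positive multiple of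
`N = L √S sin φ - Im F`, whose derivative simplifies to `L (√S)' sin φ > 0`. At `θ = a` one has
`S = 0` and `F = C e^{i(a/2 + a/α)}`, so `N(a) = 0` because `t₀/2 + t₀/α = π`. Thus `q` increases
strictly, from `q(t₀) = C` to `∞`, and takes the value `2 C` exactly once.
-/

section RadialMean

open Filter Topology

lemma rpow_smul_mem_segment {α s : ℝ} (hα : 0 ≤ α) (hs : s ∈ Icc (0 : ℝ) 1) (z : ℂ) :
    s ^ α • z ∈ segment ℝ 0 z :=
  ⟨1 - s ^ α, s ^ α, sub_nonneg.2 (Real.rpow_le_one hs.1 hs.2 hα), Real.rpow_nonneg hs.1 _,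
    sub_add_cancel _ _, by simp⟩

lemma continuousOn_comp_rpow_smul {X : Type*} [TopologicalSpace X] {f : ℂ → X} {α : ℝ} {z : ℂ}
    {S : Set ℂ} (hα : 0 ≤ α) (hf : ContinuousOn f S) (hz : segment ℝ 0 z ⊆ S) :
    ContinuousOn (fun s : ℝ => f (s ^ α • z)) (uIcc 0 1) := by
  rw [uIcc_of_le zero_le_one]
  exact hf.comp ((Real.continuous_rpow_const hα).smul continuous_const).continuousOn
    fun s hs => hz (rpow_smul_mem_segment hα hs z)

lemma exists_forall_mem_ball_segment_subset_norm_le {V E : Type*} [NormedAddCommGroup V]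
    [NormedSpace ℝ V] [ProperSpace V] [SeminormedAddCommGroup E] {g : V → E} {U : Set V} {z : V}
    (hU : IsOpen U) (hg : ContinuousOn g U) (hz : segment ℝ 0 z ⊆ U) :
    ∃ δ > 0, ∃ M, ∀ w ∈ Metric.ball z δ,
      segment ℝ 0 w ⊆ U ∧ ∀ u ∈ segment ℝ 0 w, ‖g u‖ ≤ M := by
  have hK : IsCompact (segment ℝ 0 z) := by
    rw [segment_eq_image']
    exact isCompact_Icc.image (by fun_prop)
  obtain ⟨δ, hδ, hδU⟩ := hK.exists_cthickening_subset_open hU hz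
  obtain ⟨M, hM⟩ := hK.cthickening.exists_bound_of_continuousOn (hg.mono hδU)
  have hnear : ∀ w ∈ Metric.ball z δ,
      segment ℝ 0 w ⊆ Metric.cthickening δ (segment ℝ 0 z) := by
    rintro w hw _ ⟨p, r, hp, hr, hpr, rfl⟩
    refine Metric.mem_cthickening_of_dist_le _ _ _ _ (⟨p, r, hp, hr, hpr, rfl⟩ :
      p • (0 : V) + r • z ∈ segment ℝ 0 z) ?_
    rw [dist_add_left, dist_smul₀, Real.norm_of_nonneg hr]
    exact (mul_le_of_le_one_left dist_nonneg (by linarith)).trans (Metric.mem_ball.1 hw).le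
  exact ⟨δ, hδ, M, fun w hw => ⟨(hnear w hw).trans hδU, fun u hu => hM u (hnear w hw hu)⟩⟩

variable {E : Type*} [NormedAddCommGroup E] [NormedSpace ℂ E] {f : ℂ → E} {α : ℝ} {z : ℂ}

/-- The average `∫₀¹ f (s ^ α z) ds` of `f` along the segment from `0` to `z`. After the
substitution `t = r s`, an integral of `t ↦ f (t ^ α w)` over `[0, r]` becomes
`r • radialMean α f (r ^ α w)`, which depends on the end point `r ^ α w` only through a function
that inherits its regularity from `f`. -/
noncomputable def radialMean (α : ℝ) (f : ℂ → E) (z : ℂ) : E :=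
  ∫ s in (0 : ℝ)..1, f (s ^ α • z)

lemma integral_comp_rpow_smul {r : ℝ} (hr : 0 ≤ r) (f : ℂ → E) (α : ℝ) (w : ℂ) :
    ∫ t in (0 : ℝ)..r, f (t ^ α • w) = r • radialMean α f (r ^ α • w) := by
  have hsub := intervalIntegral.smul_integral_comp_mul_left (a := 0) (b := 1)
    (fun t : ℝ => f (t ^ α • w)) r
  rw [mul_zero, mul_one] at hsub
  rw [← hsub, radialMean]
  congr 1
  refine intervalIntegral.integral_congr fun s hs => ?_
  rw [uIcc_of_le zero_le_one] at hs
  simp only [Real.mul_rpow hr hs.1, mul_comm (r ^ α), mul_smul]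

lemma continuousOn_radialMean {S : Set ℂ} (hα : 0 ≤ α) (hS : StarConvex ℝ 0 S)
    (hf : ContinuousOn f S) : ContinuousOn (radialMean α f) S := by
  rw [continuousOn_iff_continuous_domRestrict]
  have hmem (p : S × ℝ) : (projIcc 0 1 zero_le_one p.2 : ℝ) ^ α • (p.1 : ℂ) ∈ S :=
    hS.segment_subset p.1.2 (rpow_smul_mem_segment hα (Subtype.prop _) _)
  have hcont : Continuous fun p : S × ℝ =>
      f ((projIcc 0 1 zero_le_one p.2 : ℝ) ^ α • (p.1 : ℂ)) :=
    hf.comp_continuous (((Real.continuous_rpow_const hα).comp (continuous_subtype_val.comp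
      (continuous_projIcc.comp continuous_snd))).smul
      (continuous_subtype_val.comp continuous_fst)) hmem
  convert intervalIntegral.continuous_parametric_intervalIntegral_of_continuous' (μ := volume)
    (f := fun (z : S) (s : ℝ) => f ((projIcc 0 1 zero_le_one s : ℝ) ^ α • (z : ℂ))) hcont 0 1
    using 2 with z
  refine intervalIntegral.integral_congr fun s hs => ?_
  rw [uIcc_of_le zero_le_one] at hs
  simp only [projIcc_of_mem zero_le_one hs]

lemma hasDerivAt_comp_smul {u : ℂ} {r : ℝ} (hf : DifferentiableAt ℂ f (r • u)) :
    HasDerivAt (fun w => f (r • w)) (r • deriv f (r • u)) u := by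
  have h := hf.hasDerivAt.scomp u ((hasDerivAt_id u).const_smul r)
  simpa [Function.comp_def] using h

lemma hasDerivAt_radialMean_integral {U : Set ℂ} [CompleteSpace E] (hα : 0 ≤ α) (hU : IsOpen U)
    (hf : DifferentiableOn ℂ f U) (hz : segment ℝ 0 z ⊆ U) :
    HasDerivAt (radialMean α f) (∫ s in (0 : ℝ)..1, s ^ α • deriv f (s ^ α • z)) z := by
  have hf' : ContinuousOn (deriv f) U := (hf.deriv hU).continuousOn
  obtain ⟨δ, hδ, M, hM⟩ := exists_forall_mem_ball_segment_subset_norm_le hU hf' hz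
  have hIcc {s : ℝ} (hs : s ∈ uIoc (0 : ℝ) 1) : s ∈ Icc (0 : ℝ) 1 := by
    rw [uIoc_of_le zero_le_one] at hs; exact Ioc_subset_Icc_self hs
  have hmeas {g : ℝ → E} (hg : ContinuousOn g (uIcc 0 1)) :
      AEStronglyMeasurable g (volume.restrict (uIoc (0 : ℝ) 1)) :=
    (hg.mono uIoc_subset_uIcc).aestronglyMeasurable measurableSet_uIoc
  refine (intervalIntegral.hasDerivAt_integral_of_dominated_loc_of_deriv_le
    (F := fun w s => f (s ^ α • w)) (F' := fun w s => s ^ α • deriv f (s ^ α • w))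
    (bound := fun _ => M) (Metric.ball_mem_nhds z hδ) ?_
    (continuousOn_comp_rpow_smul hα hf.continuousOn hz).intervalIntegrable
    (hmeas ((Real.continuous_rpow_const hα).continuousOn.smul
      (continuousOn_comp_rpow_smul hα hf' hz))) ?_ intervalIntegrable_const ?_).2
  · filter_upwards [Metric.ball_mem_nhds z hδ] with w hw
    exact hmeas (continuousOn_comp_rpow_smul hα hf.continuousOn (hM w hw).1)
  · refine ae_of_all _ fun s hs w hw => ?_
    rw [norm_smul, Real.norm_of_nonneg (Real.rpow_nonneg (hIcc hs).1 _)]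
    exact (mul_le_of_le_one_left (norm_nonneg _)
      (Real.rpow_le_one (hIcc hs).1 (hIcc hs).2 hα)).trans
      ((hM w hw).2 _ (rpow_smul_mem_segment hα (hIcc hs) w))
  · refine ae_of_all _ fun s hs w hw => ?_
    have hmem : s ^ α • w ∈ U := (hM w hw).1 (rpow_smul_mem_segment hα (hIcc hs) w)
    exact hasDerivAt_comp_smul (hf.differentiableAt (hU.mem_nhds hmem))

lemma hasDerivAt_smul_comp_rpow_smul {s : ℝ} (hs : 0 < s) (hf : DifferentiableAt ℂ f (s ^ α • z)) :
    HasDerivAt (fun s : ℝ => s • f (s ^ α • z))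
      (f (s ^ α • z) + (α * z) • s ^ α • deriv f (s ^ α • z)) s := by
  have hpow : HasDerivAt (fun s : ℝ => s ^ α • z) ((α * s ^ (α - 1)) • z) s :=
    (Real.hasDerivAt_rpow_const (Or.inl hs.ne')).smul_const z
  have hs' : s * (α * s ^ (α - 1)) = s ^ α * α := by
    rw [Real.rpow_sub_one hs.ne']; field_simp
  refine ((hasDerivAt_id s).smul (hf.hasDerivAt.scomp s hpow)).congr_deriv ?_
  simp only [Function.comp_apply, id_eq, one_smul, add_comm (f _), smul_comm (_ * z : ℂ) (s ^ α)]
  rw [← smul_assoc s, ← smul_assoc (s ^ α), smul_smul s, hs', mul_smul,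
    Complex.real_smul (x := α)]

/-- This is Euler's identity `(s f(s ^ α z))' = f(s ^ α z) + α z s ^ α f'(s ^ α z)` integrated
over `[0, 1]`. -/
lemma radialMean_add_smul_integral_deriv {U : Set ℂ} [CompleteSpace E] (hα : 0 ≤ α)
    (hU : IsOpen U) (hf : DifferentiableOn ℂ f U) (hz : segment ℝ 0 z ⊆ U) :
    radialMean α f z + (α * z) • ∫ s in (0 : ℝ)..1, s ^ α • deriv f (s ^ α • z) = f z := by
  have hrpow : ContinuousOn (fun s : ℝ => s ^ α) (uIcc 0 1) :=
    (Real.continuous_rpow_const hα).continuousOn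
  have hcf := continuousOn_comp_rpow_smul hα hf.continuousOn hz
  have hcf' : ContinuousOn (fun s : ℝ => (α * z) • (s ^ α • deriv f (s ^ α • z))) (uIcc 0 1) :=
    (hrpow.smul (continuousOn_comp_rpow_smul hα (hf.deriv hU).continuousOn hz)).const_smul (α * z)
  have hderiv : ∀ s ∈ Ioo (0 : ℝ) 1, HasDerivAt (fun s : ℝ => s • f (s ^ α • z))
      (f (s ^ α • z) + (α * z) • s ^ α • deriv f (s ^ α • z)) s := fun s hs =>
    hasDerivAt_smul_comp_rpow_smul hs.1 (hf.differentiableAt (hU.mem_nhds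
      (hz (rpow_smul_mem_segment hα (Ioo_subset_Icc_self hs) z))))
  have key := intervalIntegral.integral_eq_sub_of_hasDerivAt_of_le zero_le_one
    ((continuousOn_id.smul hcf).mono Icc_subset_uIcc) hderiv
    (hcf.intervalIntegrable.add hcf'.intervalIntegrable)
  rw [intervalIntegral.integral_add hcf.intervalIntegrable hcf'.intervalIntegrable,
    intervalIntegral.integral_smul] at key
  simpa [radialMean] using key

lemma hasDerivAt_radialMean {U : Set ℂ} [CompleteSpace E] (hα : 0 < α) (hU : IsOpen U)
    (hf : DifferentiableOn ℂ f U) (hz : segment ℝ 0 z ⊆ U) (hz0 : z ≠ 0) :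
    HasDerivAt (radialMean α f) ((α * z : ℂ)⁻¹ • (f z - radialMean α f z)) z := by
  have hαz : (α * z : ℂ) ≠ 0 := mul_ne_zero (Complex.ofReal_ne_zero.2 hα.ne') hz0
  refine (hasDerivAt_radialMean_integral hα.le hU hf hz).congr_deriv ?_
  rw [← radialMean_add_smul_integral_deriv hα.le hU hf hz, add_sub_cancel_left,
    inv_smul_smul₀ hαz]

end RadialMean

section SqrtSub

open Complex (slitPlane exp I)

lemma continuousOn_cpow_inv_two : ContinuousOn (fun w : ℂ => w ^ (2⁻¹ : ℂ)) {w | 0 ≤ w.im} := by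
  have hformula : EqOn (fun w : ℂ => w ^ (2⁻¹ : ℂ))
      (fun w => (√((‖w‖ + w.re) / 2) : ℂ) + (√((‖w‖ - w.re) / 2) : ℂ) * I) {w | 0 ≤ w.im} :=
    fun w hw => by
      apply Complex.ext <;> simp [Complex.cpow_inv_two_re, Complex.cpow_inv_two_im_eq_sqrt hw]
  exact (Continuous.continuousOn (by fun_prop)).congr hformula

lemma im_le_two_mul_sqrt_norm_mul_im_cpow_inv_two {w : ℂ} (hw : 0 ≤ w.im) :
    w.im ≤ 2 * √‖w‖ * (w ^ (2⁻¹ : ℂ)).im := by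
  set q := w ^ (2⁻¹ : ℂ) with hq
  have hsq : q ^ 2 = w := Complex.cpow_ofNat_inv_pow w 2
  have him : w.im = 2 * q.re * q.im := by rw [← hsq, pow_two, Complex.mul_im]; ring
  have hnorm : ‖q‖ = √‖w‖ := by rw [← hsq, norm_pow, Real.sqrt_sq (norm_nonneg q)]
  have hq_im : 0 ≤ q.im := by rw [hq, Complex.cpow_inv_two_im_eq_sqrt hw]; positivity
  rw [him, ← hnorm]
  gcongr
  exact Complex.re_le_norm q

lemma ofReal_mul_exp_cpow_inv_two {a r : ℝ} (ha : a ∈ Ioo (-Real.pi) Real.pi) (hr : 0 ≤ r) :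
    (r * exp (a * I)) ^ (2⁻¹ : ℂ) = √r * exp ((a / 2 : ℝ) * I) := by
  rcases hr.eq_or_lt with rfl | hr
  · simp
  have hsq : r * exp (a * I) = (√r * exp ((a / 2 : ℝ) * I)) ^ 2 := by
    rw [mul_pow, ← Complex.exp_nat_mul, ← Complex.ofReal_pow, Real.sq_sqrt hr.le]
    push_cast
    ring_nf
  rw [hsq, Complex.sq_cpow_two_inv]
  rw [Complex.re_ofReal_mul, Complex.exp_ofReal_mul_I_re]
  exact mul_pos (Real.sqrt_pos.2 hr)
    (Real.cos_pos_of_mem_Ioo ⟨by linarith [ha.1], by linarith [ha.2]⟩)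

/-- The principal branch of `√(p - u)`. It is continuous in `u` on the closed half-plane below `p`,
which the principal square root's cut touches only from its continuous side. -/
noncomputable def sqrtSub (p u : ℂ) : ℂ := (p - u) ^ (2⁻¹ : ℂ)

lemma sqrtSub_sq (p u : ℂ) : sqrtSub p u ^ 2 = p - u := Complex.cpow_ofNat_inv_pow _ 2

lemma sqrtSub_exp_smul_exp {a r : ℝ} (ha : a ∈ Ioo (-Real.pi) Real.pi) (hr : r ≤ 1) :
    sqrtSub (exp (a * I)) (r • exp (a * I)) = √(1 - r) * exp ((a / 2 : ℝ) * I) := by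
  rw [← ofReal_mul_exp_cpow_inv_two ha (sub_nonneg.2 hr), sqrtSub, Complex.real_smul]
  congr 1
  push_cast
  ring

lemma continuousOn_sqrtSub (p : ℂ) : ContinuousOn (sqrtSub p) {u | u.im ≤ p.im} :=
  continuousOn_cpow_inv_two.comp (by fun_prop) fun u hu => by simpa using hu

lemma differentiableOn_sqrtSub (p : ℂ) :
    DifferentiableOn ℂ (sqrtSub p) {u | p - u ∈ slitPlane} := fun _ hu =>
  ((differentiableAt_id.const_sub p).cpow_const hu).differentiableWithinAt

lemma isOpen_setOf_sub_mem_slitPlane (p : ℂ) : IsOpen {u | p - u ∈ slitPlane} :=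
  Complex.isOpen_slitPlane.preimage (by fun_prop)

lemma segment_subset_setOf_sub_mem_slitPlane {p z : ℂ} (hp : 0 < p.im) (him : z.im = p.im)
    (hre : z.re < p.re) : segment ℝ 0 z ⊆ {u | p - u ∈ slitPlane} := by
  rintro _ ⟨q, s, hq, -, hqs, rfl⟩
  rw [smul_zero, zero_add, mem_ofPred_eq]
  rcases hq.eq_or_lt with rfl | hq
  · obtain rfl : s = 1 := by linarith
    exact Or.inl (by simpa using hre)
  · refine Or.inr ?_
    have him_sub : (p - s • z).im = q * p.im := by
      rw [Complex.sub_im, Complex.smul_im, him, smul_eq_mul]; linear_combination -p.im * hqs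
    rw [him_sub]
    positivity

lemma starConvex_setOf_im_le {y : ℝ} (hy : 0 ≤ y) : StarConvex ℝ 0 {u : ℂ | u.im ≤ y} :=
  (convex_halfSpace_im_le y).starConvex (by simpa using hy)

lemma integral_one_sub_rpow {α : ℝ} (hα : 0 ≤ α) :
    ∫ s in (0 : ℝ)..1, (1 - s ^ α) = α / (α + 1) := by
  have hne : α + 1 ≠ 0 := by positivity
  rw [intervalIntegral.integral_sub intervalIntegrable_const
    (intervalIntegral.intervalIntegrable_rpow' (by linarith)), integral_rpow (Or.inl (by linarith)),
    Real.zero_rpow hne]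
  simp
  field_simp
  ring

lemma le_im_sqrtSub_smul {p z : ℂ} {t : ℝ} (ht : t ∈ Icc (0 : ℝ) 1) (hp : 0 ≤ p.im)
    (him : z.im = p.im) :
    (1 - t) * p.im ≤ 2 * √(‖p‖ + ‖z‖) * (sqrtSub p (t • z)).im := by
  have hw : (p - t • z).im = (1 - t) * p.im := by
    rw [Complex.sub_im, Complex.smul_im, him, smul_eq_mul]; ring
  have hw_nonneg : 0 ≤ (p - t • z).im := hw ▸ mul_nonneg (sub_nonneg.2 ht.2) hp
  have hnorm : ‖p - t • z‖ ≤ ‖p‖ + ‖z‖ := by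
    refine (norm_sub_le _ _).trans (add_le_add_right ?_ _)
    rw [norm_smul, Real.norm_of_nonneg ht.1]
    exact mul_le_of_le_one_left (norm_nonneg z) ht.2
  have hroot : 0 ≤ (sqrtSub p (t • z)).im := by
    rw [sqrtSub, Complex.cpow_inv_two_im_eq_sqrt hw_nonneg]; positivity
  calc (1 - t) * p.im = (p - t • z).im := hw.symm
    _ ≤ 2 * √‖p - t • z‖ * (sqrtSub p (t • z)).im :=
      im_le_two_mul_sqrt_norm_mul_im_cpow_inv_two hw_nonneg
    _ ≤ 2 * √(‖p‖ + ‖z‖) * (sqrtSub p (t • z)).im := by gcongr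

lemma le_im_radialMean_sqrtSub {p z : ℂ} {α : ℝ} (hα : 0 ≤ α) (hp : 0 ≤ p.im)
    (him : z.im = p.im) :
    α / (α + 1) * p.im ≤ 2 * √(‖p‖ + ‖z‖) * (radialMean α (sqrtSub p) z).im := by
  have hcont : ContinuousOn (fun s : ℝ => sqrtSub p (s ^ α • z)) (uIcc 0 1) :=
    continuousOn_comp_rpow_smul hα (continuousOn_sqrtSub p)
      ((starConvex_setOf_im_le hp).segment_subset him.le)
  have hleft : Continuous fun s : ℝ => (1 - s ^ α) * p.im :=
    (continuous_const.sub (Real.continuous_rpow_const hα)).mul_const _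
  have him_mean : (radialMean α (sqrtSub p) z).im =
      ∫ s in (0 : ℝ)..1, (sqrtSub p (s ^ α • z)).im :=
    (Complex.imCLM.intervalIntegral_comp_comm hcont.intervalIntegrable).symm
  rw [← integral_one_sub_rpow hα, him_mean, ← intervalIntegral.integral_mul_const,
    ← intervalIntegral.integral_const_mul]
  exact intervalIntegral.integral_mono_on zero_le_one (hleft.intervalIntegrable _ _)
    ((Complex.continuous_im.comp_continuousOn hcont).const_mul _).intervalIntegrable
    fun s hs => le_im_sqrtSub_smul
      ⟨Real.rpow_nonneg hs.1 _, Real.rpow_le_one hs.1 hs.2 hα⟩ hp him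

end SqrtSub

section Ray

open Filter Topology
open Complex (exp I)

variable {a α θ : ℝ}

/-- The length `L` of the ray at angle `θ / α` whose end point `w` satisfies
`Im (w ^ α) = sin a`. -/
noncomputable def rayLength (a α θ : ℝ) : ℝ := (Real.sin a / Real.sin θ) ^ (1 / α)

/-- The power `w ^ α = L ^ α * exp (θ * I)` of the end point `w` of the ray; it is the point at
angle `θ` on the horizontal line through `exp (a * I)`. -/
noncomputable def rayPoint (a θ : ℝ) : ℂ := (Real.sin a / Real.sin θ) • exp (θ * I)

/-- The distance from `rayPoint a θ` to `exp (a * I)` along their common horizontal line, counted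
positively when `rayPoint a θ` lies on the left. -/
noncomputable def endGap (a θ : ℝ) : ℝ := Real.sin (θ - a) / Real.sin θ

/-- The integral `R` of `√(exp (a * I) - w ^ α)` along the ray, with respect to arc length. -/
noncomputable def rayIntegral (a α θ : ℝ) : ℂ :=
  ∫ t in (0 : ℝ)..rayLength a α θ, sqrtSub (exp (a * I)) (t ^ α • exp (θ * I))

/-- The contour integral `F` of `√(exp (a * I) - w ^ α) dw` along the ray. -/
noncomputable def contourIntegral (a α θ : ℝ) : ℂ := exp ((θ / α : ℝ) * I) * rayIntegral a α θ

lemma rayLength_pos (ha : 0 < Real.sin a) (hθ : 0 < Real.sin θ) : 0 < rayLength a α θ :=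
  Real.rpow_pos_of_pos (div_pos ha hθ) _

lemma rayLength_rpow (hα : α ≠ 0) (ha : 0 < Real.sin a) (hθ : 0 < Real.sin θ) :
    rayLength a α θ ^ α = Real.sin a / Real.sin θ := by
  rw [rayLength, one_div, Real.rpow_inv_rpow (div_pos ha hθ).le hα]

lemma rayPoint_im (hθ : Real.sin θ ≠ 0) : (rayPoint a θ).im = Real.sin a := by
  rw [rayPoint, Complex.smul_im, Complex.exp_ofReal_mul_I_im, smul_eq_mul, div_mul_cancel₀ _ hθ]

lemma norm_rayPoint (ha : 0 < Real.sin a) (hθ : 0 < Real.sin θ) :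
    ‖rayPoint a θ‖ = Real.sin a / Real.sin θ := by
  rw [rayPoint, norm_smul, Complex.norm_exp_ofReal_mul_I, mul_one,
    Real.norm_of_nonneg (div_pos ha hθ).le]

lemma exp_sub_rayPoint (hθ : Real.sin θ ≠ 0) : exp (a * I) - rayPoint a θ = endGap a θ := by
  apply Complex.ext
  · rw [Complex.sub_re, rayPoint, Complex.smul_re, Complex.exp_ofReal_mul_I_re,
      Complex.exp_ofReal_mul_I_re, Complex.ofReal_re, endGap, Real.sin_sub, smul_eq_mul]
    field_simp
  · rw [Complex.sub_im, rayPoint_im hθ, Complex.exp_ofReal_mul_I_im, Complex.ofReal_im, sub_self]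

lemma endGap_pos (ha : 0 < a) (hθ : θ ∈ Ioo a Real.pi) : 0 < endGap a θ :=
  div_pos (Real.sin_pos_of_mem_Ioo ⟨sub_pos.2 hθ.1, by linarith [hθ.2]⟩)
    (Real.sin_pos_of_mem_Ioo ⟨ha.trans hθ.1, hθ.2⟩)

lemma sqrtSub_rayPoint (hθ : Real.sin θ ≠ 0) (hS : 0 ≤ endGap a θ) :
    sqrtSub (exp (a * I)) (rayPoint a θ) = √(endGap a θ) := by
  have h := ofReal_mul_exp_cpow_inv_two (a := 0) (by simp [Real.pi_pos]) hS
  rw [sqrtSub, exp_sub_rayPoint hθ]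
  simpa using h

lemma hasDerivAt_rayLength (ha : 0 < Real.sin a) (hθ : 0 < Real.sin θ) :
    HasDerivAt (rayLength a α) (-(1 / α) * Real.cot θ * rayLength a α θ) θ := by
  have hx : 0 < Real.sin a / Real.sin θ := div_pos ha hθ
  have hdiv : HasDerivAt (fun θ => Real.sin a / Real.sin θ)
      (-(Real.cot θ) * (Real.sin a / Real.sin θ)) θ := by
    refine ((hasDerivAt_const θ (Real.sin a)).div (Real.hasDerivAt_sin θ) hθ.ne').congr_deriv ?_
    rw [Real.cot_eq_cos_div_sin]
    field_simp
    ring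
  refine (hdiv.rpow_const (p := 1 / α) (Or.inl hx.ne')).congr_deriv ?_
  rw [rayLength, Real.rpow_sub_one hx.ne']
  field_simp

lemma hasDerivAt_rayPoint (hθ : Real.sin θ ≠ 0) :
    HasDerivAt (rayPoint a) ((I - Real.cot θ) * rayPoint a θ) θ := by
  have hexp : HasDerivAt (fun θ : ℝ => exp (θ * I)) (exp (θ * I) * I) θ := by
    simpa using ((hasDerivAt_id θ).ofReal_comp.mul_const I).cexp
  have hdiv := (hasDerivAt_const θ (Real.sin a)).div (Real.hasDerivAt_sin θ) hθ
  refine (hdiv.smul hexp).congr_deriv ?_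
  have hθ' : (Real.sin θ : ℂ) ≠ 0 := Complex.ofReal_ne_zero.2 hθ
  simp only [rayPoint, Real.cot_eq_cos_div_sin, Complex.real_smul, Pi.div_apply]
  push_cast at hθ' ⊢
  field_simp
  ring

lemma hasDerivAt_endGap (hθ : Real.sin θ ≠ 0) :
    HasDerivAt (endGap a) (Real.sin a / Real.sin θ ^ 2) θ := by
  refine (((hasDerivAt_id θ).sub_const a).sin.div (Real.hasDerivAt_sin θ) hθ).congr_deriv ?_
  have h : Real.sin a = Real.sin (θ - (θ - a)) := by rw [sub_sub_cancel]
  rw [h, Real.sin_sub θ (θ - a), id, mul_one, mul_comm (Real.sin θ), mul_comm (Real.cos θ)]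

lemma rayIntegral_eq_smul_radialMean (hα : α ≠ 0) (ha : 0 < Real.sin a) (hθ : 0 < Real.sin θ) :
    rayIntegral a α θ =
      rayLength a α θ • radialMean α (sqrtSub (exp (a * I))) (rayPoint a θ) := by
  rw [rayIntegral, integral_comp_rpow_smul (rayLength_pos ha hθ).le, rayLength_rpow hα ha hθ,
    rayPoint]

lemma continuousOn_rayIntegral (hα : 0 < α) (ha : 0 < Real.sin a) :
    ContinuousOn (rayIntegral a α) (Ioo 0 Real.pi) := by
  have him : (exp (a * I)).im = Real.sin a := Complex.exp_ofReal_mul_I_im a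
  have hmean := continuousOn_radialMean hα.le (starConvex_setOf_im_le (him ▸ ha.le))
    (continuousOn_sqrtSub (exp (a * I)))
  have hL : ContinuousOn (rayLength a α) (Ioo 0 Real.pi) := fun θ hθ =>
    (hasDerivAt_rayLength ha (Real.sin_pos_of_mem_Ioo hθ)).continuousAt.continuousWithinAt
  have hz : ContinuousOn (rayPoint a) (Ioo 0 Real.pi) := fun θ hθ =>
    (hasDerivAt_rayPoint (Real.sin_pos_of_mem_Ioo hθ).ne').continuousAt.continuousWithinAt
  refine (hL.smul (hmean.comp hz fun θ hθ => ?_)).congr fun θ hθ =>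
    rayIntegral_eq_smul_radialMean hα.ne' ha (Real.sin_pos_of_mem_Ioo hθ)
  exact ((rayPoint_im (Real.sin_pos_of_mem_Ioo hθ).ne').trans him.symm).le

lemma hasDerivAt_rayIntegral (hα : 0 < α) (ha : 0 < a) (hθ : θ ∈ Ioo a Real.pi) :
    HasDerivAt (rayIntegral a α)
      (1 / α * ((I - Real.cot θ) * (rayLength a α θ * √(endGap a θ)) - I * rayIntegral a α θ))
      θ := by
  have hsa : 0 < Real.sin a := Real.sin_pos_of_mem_Ioo ⟨ha, hθ.1.trans hθ.2⟩
  have hmem : ∀ᶠ x in 𝓝 θ, x ∈ Ioo 0 Real.pi := Ioo_mem_nhds (ha.trans hθ.1) hθ.2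
  have hsθ : 0 < Real.sin θ := Real.sin_pos_of_mem_Ioo hmem.self_of_nhds
  have hz0 : rayPoint a θ ≠ 0 := fun h =>
    hsa.ne' (by rw [← rayPoint_im hsθ.ne', h, Complex.zero_im])
  have him : (exp (a * I)).im = Real.sin a := Complex.exp_ofReal_mul_I_im a
  have hre : (rayPoint a θ).re < (exp (a * I)).re := by
    rw [← sub_pos, ← Complex.sub_re, exp_sub_rayPoint hsθ.ne', Complex.ofReal_re]
    exact endGap_pos ha hθ
  have hmean := hasDerivAt_radialMean hα (isOpen_setOf_sub_mem_slitPlane _)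
    (differentiableOn_sqrtSub _) (segment_subset_setOf_sub_mem_slitPlane (him ▸ hsa)
      ((rayPoint_im hsθ.ne').trans him.symm) hre) hz0
  refine (((hasDerivAt_rayLength (α := α) hsa hsθ).smul
    (hmean.scomp θ (hasDerivAt_rayPoint hsθ.ne'))).congr_of_eventuallyEq ?_).congr_deriv ?_
  · filter_upwards [hmem] with x hx
    exact rayIntegral_eq_smul_radialMean hα.ne' hsa (Real.sin_pos_of_mem_Ioo hx)
  · have hα' : (α : ℂ) ≠ 0 := Complex.ofReal_ne_zero.2 hα.ne'
    rw [sqrtSub_rayPoint hsθ.ne' (endGap_pos ha hθ).le,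
      rayIntegral_eq_smul_radialMean hα.ne' hsa hsθ]
    simp only [Complex.real_smul, smul_eq_mul, Function.comp_apply]
    push_cast
    field_simp
    ring

/-- Only the end point of the ray contributes, since the integrand of `contourIntegral` does not
depend on `θ`. -/
lemma hasDerivAt_contourIntegral (hα : 0 < α) (ha : 0 < a) (hθ : θ ∈ Ioo a Real.pi) :
    HasDerivAt (contourIntegral a α) ((rayLength a α θ * √(endGap a θ) / α : ℝ) *
      (exp ((θ / α : ℝ) * I) * (I - Real.cot θ))) θ := by
  have hexp : HasDerivAt (fun θ : ℝ => exp ((θ / α : ℝ) * I))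
      (exp ((θ / α : ℝ) * I) * ((1 / α : ℝ) * I)) θ :=
    (((hasDerivAt_id θ).div_const α).ofReal_comp.mul_const I).cexp
  refine (hexp.mul (hasDerivAt_rayIntegral hα ha hθ)).congr_deriv ?_
  push_cast
  ring

lemma rayIntegral_self (hα : 0 ≤ α) (ha : a ∈ Ioo 0 Real.pi) :
    rayIntegral a α a = (∫ ξ in (0 : ℝ)..1, √(1 - ξ ^ α) : ℝ) * exp ((a / 2 : ℝ) * I) := by
  rw [rayIntegral, rayLength, div_self (Real.sin_pos_of_mem_Ioo ha).ne', Real.one_rpow,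
    ← intervalIntegral.integral_ofReal, ← intervalIntegral.integral_mul_const]
  refine intervalIntegral.integral_congr fun s hs => ?_
  rw [uIcc_of_le zero_le_one] at hs
  exact sqrtSub_exp_smul_exp ⟨by linarith [ha.1, Real.pi_pos], ha.2⟩
    (Real.rpow_le_one hs.1 hs.2 hα)

lemma le_rayIntegral_im (hα : 0 < α) (ha : 0 < Real.sin a) (hθ : 0 < Real.sin θ) :
    α / (α + 1) * Real.sin a / 2 * (rayLength a α θ / √(1 + Real.sin a / Real.sin θ)) ≤
      (rayIntegral a α θ).im := by
  have him : (exp (a * I)).im = Real.sin a := Complex.exp_ofReal_mul_I_im a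
  have hmean := le_im_radialMean_sqrtSub hα.le (him ▸ ha.le) ((rayPoint_im hθ.ne').trans him.symm)
  rw [him, Complex.norm_exp_ofReal_mul_I, norm_rayPoint ha hθ] at hmean
  have hsqrt : 0 < √(1 + Real.sin a / Real.sin θ) := by positivity
  rw [rayIntegral_eq_smul_radialMean hα.ne' ha hθ, Complex.smul_im, smul_eq_mul, ← mul_div_assoc,
    div_le_iff₀ hsqrt]
  linarith [mul_le_mul_of_nonneg_left hmean (rayLength_pos (α := α) ha hθ).le]

lemma rayIntegral_im_pos (hα : 0 < α) (ha : 0 < Real.sin a) (hθ : 0 < Real.sin θ) :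
    0 < (rayIntegral a α θ).im := by
  have hL := rayLength_pos (α := α) ha hθ
  exact lt_of_lt_of_le (by positivity) (le_rayIntegral_im hα ha hθ)

lemma tendsto_rpow_div_sqrt_one_add_atTop {p : ℝ} (hp : 1 / 2 < p) :
    Tendsto (fun x : ℝ => x ^ p / √(1 + x)) atTop atTop := by
  have hpow := (tendsto_rpow_atTop (sub_pos.2 hp)).atTop_div_const (Real.sqrt_pos.2 zero_lt_two)
  refine tendsto_atTop_mono' _ ?_ hpow
  filter_upwards [eventually_ge_atTop 1] with x hx
  have hx0 : 0 < x := by linarith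
  rw [Real.rpow_sub hx0, ← Real.sqrt_eq_rpow, div_div, ← Real.sqrt_mul hx0.le]
  gcongr
  linarith

lemma tendsto_sin_nhdsLT_pi : Tendsto Real.sin (𝓝[<] Real.pi) (𝓝[>] 0) := by
  refine tendsto_nhdsWithin_iff.2 ⟨?_, ?_⟩
  · simpa using (Real.continuous_sin.tendsto Real.pi).mono_left nhdsWithin_le_nhds
  · filter_upwards [Ioo_mem_nhdsLT Real.pi_pos] with θ hθ using Real.sin_pos_of_mem_Ioo hθ

lemma tendsto_rayIntegral_im_atTop (hα : 0 < α) (hα2 : α < 2) (ha : 0 < Real.sin a) :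
    Tendsto (fun θ => (rayIntegral a α θ).im) (𝓝[<] Real.pi) atTop := by
  have hx : Tendsto (fun θ => Real.sin a / Real.sin θ) (𝓝[<] Real.pi) atTop :=
    (tendsto_inv_nhdsGT_zero.comp tendsto_sin_nhdsLT_pi).const_mul_atTop ha
  have hlow := ((tendsto_rpow_div_sqrt_one_add_atTop (one_div_lt_one_div_of_lt hα hα2)).comp
    hx).const_mul_atTop (by positivity : 0 < α / (α + 1) * Real.sin a / 2)
  refine tendsto_atTop_mono' _ ?_ hlow
  filter_upwards [Ioo_mem_nhdsLT Real.pi_pos] with θ hθ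
  exact le_rayIntegral_im hα ha (Real.sin_pos_of_mem_Ioo hθ)

end Ray

section ImQuotient

open Filter Topology
open Complex (exp I)

variable {a α θ : ℝ}

lemma Ioo_min_subset_Ioo_pi {b : ℝ} : Ioo b (min Real.pi (Real.pi * α)) ⊆ Ioo b Real.pi :=
  Ioo_subset_Ioo_right (min_le_left _ _)

lemma sin_div_pos_of_mem_Ioo_min (hα : 0 < α) (hθ : θ ∈ Ioo 0 (min Real.pi (Real.pi * α))) :
    0 < Real.sin (θ / α) :=
  Real.sin_pos_of_mem_Ioo
    ⟨div_pos hθ.1 hα, (div_lt_iff₀ hα).2 (hθ.2.trans_le (min_le_right _ _))⟩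

/-- The quotient `Im R / sin (θ / α)`. With `a = t0 α`, the function `ρ_α` vanishes exactly where it
takes the value `2 ∫₀¹ √(1 - ξ ^ α) dξ`. -/
noncomputable def imQuotient (a α θ : ℝ) : ℝ := (rayIntegral a α θ).im / Real.sin (θ / α)

/-- The numerator `L √S sin (θ / α) - Im F` of the derivative of `imQuotient`, up to the factor
`1 / α`; here `S` is `endGap a θ`. -/
noncomputable def slopeNumerator (a α θ : ℝ) : ℝ :=
  rayLength a α θ * √(endGap a θ) * Real.sin (θ / α) - (contourIntegral a α θ).im

lemma hasDerivAt_sin_div (α θ : ℝ) :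
    HasDerivAt (fun θ => Real.sin (θ / α)) (Real.cos (θ / α) * (1 / α)) θ :=
  ((hasDerivAt_id θ).div_const α).sin

lemma hasDerivAt_imQuotient (hα : 0 < α) (ha : 0 < a) (hθ : θ ∈ Ioo a Real.pi)
    (hsin : Real.sin (θ / α) ≠ 0) :
    HasDerivAt (imQuotient a α) (slopeNumerator a α θ / (α * Real.sin (θ / α) ^ 2)) θ := by
  have him : HasDerivAt (fun θ => (rayIntegral a α θ).im)
      (1 / α * (rayLength a α θ * √(endGap a θ) - (rayIntegral a α θ).re)) θ := by
    refine (Complex.imCLM.hasFDerivAt.comp_hasDerivAt θ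
      (hasDerivAt_rayIntegral hα ha hθ)).congr_deriv ?_
    rw [← Complex.ofReal_one, ← Complex.ofReal_div, ← Complex.ofReal_mul]
    simp only [Complex.imCLM_apply, Complex.im_ofReal_mul, Complex.sub_im, Complex.im_mul_ofReal,
      Complex.I_im, Complex.ofReal_im, Complex.I_mul_im]
    ring
  refine (him.div (hasDerivAt_sin_div α θ) hsin).congr_deriv ?_
  rw [slopeNumerator, contourIntegral, Complex.mul_im, Complex.exp_ofReal_mul_I_re,
    Complex.exp_ofReal_mul_I_im]
  field_simp
  ring

lemma hasDerivAt_slopeNumerator (hα : 0 < α) (ha : 0 < a) (hθ : θ ∈ Ioo a Real.pi) :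
    HasDerivAt (slopeNumerator a α) (rayLength a α θ *
      (Real.sin a / Real.sin θ ^ 2 / (2 * √(endGap a θ))) * Real.sin (θ / α)) θ := by
  have hsa : 0 < Real.sin a := Real.sin_pos_of_mem_Ioo ⟨ha, hθ.1.trans hθ.2⟩
  have hsθ : 0 < Real.sin θ := Real.sin_pos_of_mem_Ioo ⟨ha.trans hθ.1, hθ.2⟩
  have him := Complex.imCLM.hasFDerivAt.comp_hasDerivAt θ (hasDerivAt_contourIntegral hα ha hθ)
  refine ((((hasDerivAt_rayLength hsa hsθ).mul ((hasDerivAt_endGap hsθ.ne').sqrt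
    (endGap_pos ha hθ).ne')).mul (hasDerivAt_sin_div α θ)).sub him).congr_deriv ?_
  simp only [Complex.imCLM_apply, Complex.mul_im, Pi.mul_apply, Complex.exp_ofReal_mul_I_re,
    Complex.exp_ofReal_mul_I_im, Complex.sub_re, Complex.sub_im, Complex.I_re, Complex.I_im,
    Complex.ofReal_re, Complex.ofReal_im]
  ring

lemma slopeNumerator_self (hα : 0 ≤ α) (ha : a ∈ Ioo 0 Real.pi) :
    slopeNumerator a α a = -(∫ ξ in (0 : ℝ)..1, √(1 - ξ ^ α)) * Real.sin (a / 2 + a / α) := by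
  rw [slopeNumerator, endGap, sub_self, Real.sin_zero, zero_div, Real.sqrt_zero, mul_zero,
    zero_mul, contourIntegral, rayIntegral_self hα ha, mul_left_comm, Complex.im_ofReal_mul,
    ← Complex.exp_add, ← add_mul, ← Complex.ofReal_add, Complex.exp_ofReal_mul_I_im,
    add_comm (a / α)]
  ring

lemma imQuotient_self (hα : 0 ≤ α) (ha : a ∈ Ioo 0 Real.pi) :
    imQuotient a α a =
      (∫ ξ in (0 : ℝ)..1, √(1 - ξ ^ α)) * Real.sin (a / 2) / Real.sin (a / α) := by
  rw [imQuotient, rayIntegral_self hα ha, Complex.im_ofReal_mul, Complex.exp_ofReal_mul_I_im]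

lemma integral_sqrt_one_sub_rpow_pos (hα : 0 < α) :
    0 < ∫ ξ in (0 : ℝ)..1, √(1 - ξ ^ α) := by
  have hcont : Continuous fun ξ : ℝ => √(1 - ξ ^ α) :=
    (continuous_const.sub (Real.continuous_rpow_const hα.le)).sqrt
  exact intervalIntegral.intervalIntegral_pos_of_pos_on (hcont.intervalIntegrable _ _)
    (fun s hs => Real.sqrt_pos.2 (sub_pos.2 (Real.rpow_lt_one hs.1.le hs.2 hα))) one_pos

lemma continuousOn_slopeNumerator (hα : 0 < α) (ha : 0 < Real.sin a) :
    ContinuousOn (slopeNumerator a α) (Ioo 0 Real.pi) := by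
  have hL : ContinuousOn (rayLength a α) (Ioo 0 Real.pi) := fun θ hθ =>
    (hasDerivAt_rayLength ha (Real.sin_pos_of_mem_Ioo hθ)).continuousAt.continuousWithinAt
  have hS : ContinuousOn (endGap a) (Ioo 0 Real.pi) := fun θ hθ =>
    (hasDerivAt_endGap (Real.sin_pos_of_mem_Ioo hθ).ne').continuousAt.continuousWithinAt
  have hF : ContinuousOn (contourIntegral a α) (Ioo 0 Real.pi) :=
    (Continuous.continuousOn (by fun_prop)).mul (continuousOn_rayIntegral hα ha)
  exact ((hL.mul hS.sqrt).mul (by fun_prop)).sub (Complex.continuous_im.comp_continuousOn hF)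

lemma continuousOn_imQuotient (hα : 0 < α) (ha : 0 < Real.sin a) :
    ContinuousOn (imQuotient a α) (Ioo 0 (min Real.pi (Real.pi * α))) :=
  (Complex.continuous_im.comp_continuousOn
    ((continuousOn_rayIntegral hα ha).mono Ioo_min_subset_Ioo_pi)).div (by fun_prop)
    fun _ hθ => (sin_div_pos_of_mem_Ioo_min hα hθ).ne'

lemma slopeNumerator_pos (hα : 0 < α) (ha : 0 < a) (hsin : Real.sin (a / 2 + a / α) ≤ 0)
    (hθ : θ ∈ Ioo a (min Real.pi (Real.pi * α))) : 0 < slopeNumerator a α θ := by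
  have haπ : a ∈ Ioo 0 Real.pi := ⟨ha, hθ.1.trans (Ioo_min_subset_Ioo_pi hθ).2⟩
  have hsa : 0 < Real.sin a := Real.sin_pos_of_mem_Ioo haπ
  have hmono : StrictMonoOn (slopeNumerator a α) (Ico a (min Real.pi (Real.pi * α))) := by
    refine strictMonoOn_of_deriv_pos (convex_Ico _ _) ((continuousOn_slopeNumerator hα hsa).mono
      fun x hx => ⟨ha.trans_le hx.1, hx.2.trans_le (min_le_left _ _)⟩) fun x hx => ?_
    rw [interior_Ico] at hx
    have hxπ := Ioo_min_subset_Ioo_pi hx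
    have hsx : 0 < Real.sin x := Real.sin_pos_of_mem_Ioo ⟨ha.trans hx.1, hxπ.2⟩
    have hsxα := sin_div_pos_of_mem_Ioo_min hα ⟨ha.trans hx.1, hx.2⟩
    have hL := rayLength_pos (α := α) hsa hsx
    have hS := endGap_pos ha hxπ
    rw [(hasDerivAt_slopeNumerator hα ha hxπ).deriv]
    positivity
  calc 0 ≤ slopeNumerator a α a := by
        rw [slopeNumerator_self hα.le haπ, neg_mul, Left.nonneg_neg_iff]
        exact mul_nonpos_of_nonneg_of_nonpos (integral_sqrt_one_sub_rpow_pos hα).le hsin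
    _ < slopeNumerator a α θ := hmono ⟨le_rfl, hθ.1.trans hθ.2⟩ ⟨hθ.1.le, hθ.2⟩ hθ.1

lemma strictMonoOn_imQuotient (hα : 0 < α) (ha : a ∈ Ioo 0 Real.pi)
    (hsin : Real.sin (a / 2 + a / α) ≤ 0) :
    StrictMonoOn (imQuotient a α) (Ico a (min Real.pi (Real.pi * α))) := by
  refine strictMonoOn_of_deriv_pos (convex_Ico _ _)
    ((continuousOn_imQuotient hα (Real.sin_pos_of_mem_Ioo ha)).mono
      fun x hx => ⟨ha.1.trans_le hx.1, hx.2⟩) fun x hx => ?_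
  rw [interior_Ico] at hx
  have hsxα := sin_div_pos_of_mem_Ioo_min hα ⟨ha.1.trans hx.1, hx.2⟩
  rw [(hasDerivAt_imQuotient hα ha.1 (Ioo_min_subset_Ioo_pi hx) hsxα.ne').deriv]
  exact div_pos (slopeNumerator_pos hα ha.1 hsin hx) (by positivity)

lemma tendsto_imQuotient_of_one_le (hα : 1 ≤ α) (hα2 : α < 2) (ha : 0 < Real.sin a) :
    Tendsto (imQuotient a α) (𝓝[<] Real.pi) atTop := by
  have hα0 : 0 < α := by linarith
  refine tendsto_atTop_mono' _ ?_ (tendsto_rayIntegral_im_atTop hα0 hα2 ha)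
  filter_upwards [Ioo_mem_nhdsLT Real.pi_pos] with θ hθ
  have hsin : 0 < Real.sin (θ / α) := Real.sin_pos_of_mem_Ioo
    ⟨div_pos hθ.1 hα0, (div_le_self hθ.1.le hα).trans_lt hθ.2⟩
  exact le_div_self (rayIntegral_im_pos hα0 ha (Real.sin_pos_of_mem_Ioo hθ)).le hsin
    (Real.sin_le_one _)

lemma tendsto_imQuotient_of_lt_one (hα : 0 < α) (hα1 : α < 1) (ha : 0 < Real.sin a) :
    Tendsto (imQuotient a α) (𝓝[<] (Real.pi * α)) atTop := by
  have hmem : Real.pi * α ∈ Ioo 0 Real.pi :=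
    ⟨mul_pos Real.pi_pos hα, mul_lt_of_lt_one_right Real.pi_pos hα1⟩
  have hR := (continuousOn_rayIntegral hα ha).continuousAt (isOpen_Ioo.mem_nhds hmem)
  have him : Tendsto (fun θ => (rayIntegral a α θ).im) (𝓝[<] (Real.pi * α))
      (𝓝 (rayIntegral a α (Real.pi * α)).im) :=
    (Complex.continuous_im.continuousAt.comp hR).mono_left nhdsWithin_le_nhds
  have hdiv : Tendsto (fun θ => θ / α) (𝓝[<] (Real.pi * α)) (𝓝[<] Real.pi) := by
    refine tendsto_nhdsWithin_iff.2 ⟨?_, ?_⟩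
    · exact ((continuous_id.div_const α).tendsto' _ _ (mul_div_cancel_right₀ _ hα.ne')).mono_left
        nhdsWithin_le_nhds
    · filter_upwards [self_mem_nhdsWithin] with θ hθ using (div_lt_iff₀ hα).2 hθ
  exact him.pos_mul_atTop (rayIntegral_im_pos hα ha (Real.sin_pos_of_mem_Ioo hmem))
    (tendsto_inv_nhdsGT_zero.comp (tendsto_sin_nhdsLT_pi.comp hdiv))

lemma tendsto_imQuotient (hα : 0 < α) (hα2 : α < 2) (ha : 0 < Real.sin a) :
    Tendsto (imQuotient a α) (𝓝[<] min Real.pi (Real.pi * α)) atTop := by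
  rcases le_or_gt 1 α with h | h
  · rw [min_eq_left (le_mul_of_one_le_right Real.pi_pos.le h)]
    exact tendsto_imQuotient_of_one_le h hα2 ha
  · rw [min_eq_right (mul_le_of_le_one_right Real.pi_pos.le h.le)]
    exact tendsto_imQuotient_of_lt_one hα h ha

theorem existsUnique_imQuotient_eq {y : ℝ} (hα : 0 < α) (hα2 : α < 2)
    (ha : a ∈ Ioo 0 (min Real.pi (Real.pi * α))) (hsin : Real.sin (a / 2 + a / α) ≤ 0)
    (hy : imQuotient a α a < y) :
    ∃! θ, θ ∈ Ioo a (min Real.pi (Real.pi * α)) ∧ imQuotient a α θ = y := by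
  have haπ : a ∈ Ioo 0 Real.pi := Ioo_min_subset_Ioo_pi ha
  have hsa : 0 < Real.sin a := Real.sin_pos_of_mem_Ioo haπ
  have hIco : Ico a (min Real.pi (Real.pi * α)) ∈ 𝓝[<] min Real.pi (Real.pi * α) :=
    Ico_mem_nhdsLT ha.2
  obtain ⟨θ, hθ, rfl⟩ : y ∈ imQuotient a α '' Ico a (min Real.pi (Real.pi * α)) :=
    isPreconnected_Ico.intermediate_value_Ici (left_mem_Ico.2 ha.2) (le_principal_iff.2 hIco)
      ((continuousOn_imQuotient hα hsa).mono fun x hx => ⟨ha.1.trans_le hx.1, hx.2⟩)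
      (tendsto_imQuotient hα hα2 hsa) hy.le
  refine ⟨θ, ⟨⟨hθ.1.lt_of_ne ?_, hθ.2⟩, rfl⟩, fun x hx => ?_⟩
  · rintro rfl
    exact hy.false
  · exact (strictMonoOn_imQuotient hα haπ hsin).injOn ⟨hx.1.1.le, hx.1.2⟩ hθ hx.2

lemma exists_continuousOn_sq_eq_rpow_mul_exp_sub (hα : 0 < α) (ha : a ∈ Ioo 0 Real.pi)
    (hθ : 0 < Real.sin θ) : ∃ g : ℝ → ℂ, ContinuousOn g (Icc 0 (rayLength a α θ)) ∧
      (∀ t, g t ^ 2 = exp (I * θ) * (t ^ α : ℝ) - exp (I * a)) ∧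
      g 0 = -I * exp (I * (a / 2 : ℝ)) ∧
      (∫ t in (0 : ℝ)..rayLength a α θ, g t).re = (rayIntegral a α θ).im := by
  have hsa := Real.sin_pos_of_mem_Ioo ha
  refine ⟨fun t => -I * sqrtSub (exp (a * I)) (t ^ α • exp (θ * I)), ?_, fun t => ?_, ?_, ?_⟩
  · refine ((continuousOn_sqrtSub _).comp ((Real.continuous_rpow_const hα.le).smul
      continuous_const).continuousOn fun t ht => ?_).const_mul _
    change (t ^ α • exp (θ * I)).im ≤ (exp (a * I)).im
    rw [Complex.smul_im, Complex.exp_ofReal_mul_I_im, Complex.exp_ofReal_mul_I_im,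
      smul_eq_mul, ← le_div_iff₀ hθ, ← rayLength_rpow hα.ne' hsa hθ]
    exact Real.rpow_le_rpow ht.1 ht.2 hα.le
  · rw [mul_pow, sqrtSub_sq, neg_sq, Complex.I_sq, Complex.real_smul, mul_comm I, mul_comm I]
    ring
  · have h := sqrtSub_exp_smul_exp (r := 0) ⟨by linarith [ha.1, Real.pi_pos], ha.2⟩ zero_le_one
    rw [zero_smul, sub_zero, Real.sqrt_one, Complex.ofReal_one, one_mul] at h
    simp only [Real.zero_rpow hα.ne', zero_smul, h, mul_comm I]
  · rw [intervalIntegral.integral_const_mul, ← rayIntegral, neg_mul, Complex.neg_re,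
      Complex.I_mul_re, neg_neg]

end ImQuotient

section T0

variable {α : ℝ}

lemma t0_mem_Ioo (hα : 0 < α) (hα2 : α < 2) : t0 α ∈ Ioo 0 (min Real.pi (Real.pi * α)) := by
  have hπ := Real.pi_pos
  refine ⟨by rw [t0]; positivity, lt_min ?_ ?_⟩ <;> rw [t0, div_lt_iff₀ (by linarith)]
  · nlinarith
  · nlinarith [mul_pos hπ (mul_pos hα hα)]

lemma t0_half_add_t0_div (hα : 0 < α) : t0 α / 2 + t0 α / α = Real.pi := by
  rw [t0]
  field_simp

lemma imQuotient_t0 (hα : 0 < α) (hα2 : α < 2) :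
    imQuotient (t0 α) α (t0 α) = ∫ ξ in (0 : ℝ)..1, √(1 - ξ ^ α) := by
  have ht := Ioo_min_subset_Ioo_pi (t0_mem_Ioo hα hα2)
  have hsin : 0 < Real.sin (t0 α / 2) :=
    Real.sin_pos_of_mem_Ioo ⟨by linarith [ht.1], by linarith [ht.1, ht.2]⟩
  rw [imQuotient_self hα.le ht, eq_sub_of_add_eq' (t0_half_add_t0_div hα), Real.sin_pi_sub,
    mul_div_cancel_right₀ _ hsin.ne']

end T0

/-- For every `α ∈ (0,2)`, the function `ρ_α` has exactly one zero `θ₀(α)` in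
the open interval `(t₀(α), min(π, πα))`.  Here `ρ` is any function satisfying the defining
property of `ρ_α`: for each `θ` in `[t₀(α), min(π, πα))` and each continuous branch `g` of
`√(e^{iθ}t^α − e^{it₀(α)})` on `[0, Z₀(θ)]` with `g 0 = −i e^{i t₀(α)/2}`,
`ρ θ = Re ∫₀^{Z₀(θ)} g − 2 sin(θ/α) ∫₀¹ √(1−ξ^α) dξ`. -/
theorem stmt0 (α : ℝ) (hα0 : 0 < α) (hα2 : α < 2) (ρ : ℝ → ℝ)
    (hρ : ∀ θ ∈ Set.Ico (t0 α) (min Real.pi (Real.pi * α)), ∀ g : ℝ → ℂ,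
      ContinuousOn g (Set.Icc 0 (Z0 α θ)) →
      (∀ t ∈ Set.Icc (0 : ℝ) (Z0 α θ),
        g t ^ 2 = Complex.exp (Complex.I * (θ : ℂ)) * ((t ^ α : ℝ) : ℂ)
          - Complex.exp (Complex.I * ((t0 α : ℝ) : ℂ))) →
      g 0 = -Complex.I * Complex.exp (Complex.I * ((t0 α / 2 : ℝ) : ℂ)) →
      ρ θ = (∫ t in (0 : ℝ)..(Z0 α θ), g t).re
        - 2 * Real.sin (θ / α) * ∫ ξ in (0 : ℝ)..1, Real.sqrt (1 - ξ ^ α)) :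
    ∃! θ₀, θ₀ ∈ Set.Ioo (t0 α) (min Real.pi (Real.pi * α)) ∧ ρ θ₀ = 0 := by
  have ht := t0_mem_Ioo hα0 hα2
  have hC := integral_sqrt_one_sub_rpow_pos hα0
  have hρ_zero : ∀ θ ∈ Ioo (t0 α) (min Real.pi (Real.pi * α)),
      ρ θ = 0 ↔ imQuotient (t0 α) α θ = 2 * ∫ ξ in (0 : ℝ)..1, √(1 - ξ ^ α) := by
    intro θ hθ
    have hθ0 : θ ∈ Ioo 0 (min Real.pi (Real.pi * α)) := ⟨ht.1.trans hθ.1, hθ.2⟩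
    obtain ⟨g, hg_cont, hg_sq, hg_zero, hg_int⟩ := exists_continuousOn_sq_eq_rpow_mul_exp_sub hα0
      (Ioo_min_subset_Ioo_pi ht) (Real.sin_pos_of_mem_Ioo (Ioo_min_subset_Ioo_pi hθ0))
    have hρθ := hρ θ (Ioo_subset_Ico_self hθ) g hg_cont (fun t _ => hg_sq t) hg_zero
    rw [hρθ, Z0, ← rayLength, hg_int, imQuotient,
      div_eq_iff (sin_div_pos_of_mem_Ioo_min hα0 hθ0).ne', sub_eq_zero, mul_right_comm]
  refine (existsUnique_congr fun θ => and_congr_right (hρ_zero θ)).2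
    (existsUnique_imQuotient_eq hα0 hα2 ht ?_ ?_)
  · rw [t0_half_add_t0_div hα0, Real.sin_pi]
  · rw [imQuotient_t0 hα0 hα2]
    linarith
end

section
/- The function α ↦ θ₀(α) is continuous on the interval (0,2), where θ₀(α) denotes the unique zero of ρ_α in (t₀(α), min(π, πα)). -/
open MeasureTheory Set

/-!
On `[0, Z₀(θ)]` the function under the square root lies in the closed lower half-plane, so `g_θ` is
`-i` times the principal root of its negative, and `Re g_θ` is the real part of the principal root.
The latter is continuous on all of `ℂ`, so `ρ_α(θ)` is jointly continuous in `(α, θ)`.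

Moreover `ρ_α(t₀(α)) < 0`, while `ρ_α > 0` near `min(π, πα)`: for `α < 1` by evaluation at `πα`,
where the sine term vanishes, and for `α ≥ 1` because the integral grows like `Z₀(θ)^(1 - α/2)` as
`θ → π`. By uniqueness of the zero, `ρ_α(θ)` has the sign of `θ - θ₀(α)`. For fixed `θ ≠ θ₀(α)` this
sign persists under small changes of `α`, which squeezes `θ₀`.
-/

open Filter Real Topology

theorem cmp_eq_cmp_of_unique_eq {Y Z : Type*} [ConditionallyCompleteLinearOrder Y]
    [TopologicalSpace Y] [OrderTopology Y] [DenselyOrdered Y] [LinearOrder Z] [TopologicalSpace Z]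
    [OrderClosedTopology Z] {f : Y → Z} {a b c : Y} {m : Z} (hf : ContinuousOn f (Ico a b))
    (hfa : f a < m) (hfb : ∃ d ∈ Ioo a b, m < f d) (hc : ∀ y ∈ Ioo a b, f y = m → y = c) :
    ∀ y ∈ Ioo a b, cmp (f y) m = cmp y c := by
  have below : ∀ y ∈ Ioo a b, y < c → f y < m := by
    intro y hy hyc
    by_contra! hmy
    obtain ⟨z, hz, hfz⟩ := intermediate_value_Ioc hy.1.le
      (hf.mono (Icc_subset_Ico_right hy.2)) ⟨hfa, hmy⟩
    exact (hz.2.trans_lt hyc).ne (hc z ⟨hz.1, hz.2.trans_lt hy.2⟩ hfz)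
  obtain ⟨d, hd, hmd⟩ := hfb
  obtain ⟨z, hz, hfz⟩ := intermediate_value_Ioo hd.1.le
    (hf.mono (Icc_subset_Ico_right hd.2)) ⟨hfa, hmd⟩
  obtain rfl : z = c := hc z ⟨hz.1, hz.2.trans hd.2⟩ hfz
  have above : ∀ y ∈ Ioo a b, z < y → m < f y := by
    intro y hy hzy
    by_contra! hym
    have hsub : uIcc y d ⊆ Ioo a b := ordConnected_Ioo.uIcc_subset hy hd
    obtain ⟨w, hw, hfw⟩ := intermediate_value_uIcc
      (hf.mono (hsub.trans Ioo_subset_Ico_self)) (Icc_subset_uIcc ⟨hym, hmd.le⟩)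
    exact ((lt_inf_iff.2 ⟨hzy, hz.2⟩).trans_le hw.1).ne' (hc w (hsub hw) hfw)
  intro y hy
  rcases lt_trichotomy y z with h | rfl | h
  · rw [(cmp_eq_lt_iff _ _).2 h, (cmp_eq_lt_iff _ _).2 (below y hy h)]
  · rw [hfz, cmp_self_eq_eq, cmp_self_eq_eq]
  · rw [(cmp_eq_gt_iff _ _).2 h, (cmp_eq_gt_iff _ _).2 (above y hy h)]

theorem continuousAt_of_cmp_eq_cmp {X Y Z : Type*} [TopologicalSpace X] [LinearOrder Y]
    [TopologicalSpace Y] [OrderTopology Y] [DenselyOrdered Y] [LinearOrder Z] [TopologicalSpace Z]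
    [OrderClosedTopology Z] {f : X → Y → Z} {a b c : X → Y} {m : Z} {x₀ : X}
    (ha : ContinuousAt a x₀) (hb : ContinuousAt b x₀) (hc : c x₀ ∈ Ioo (a x₀) (b x₀))
    (hf : ∀ y ∈ Ioo (a x₀) (b x₀), ContinuousAt (fun x => f x y) x₀)
    (hcmp : ∀ᶠ x in 𝓝 x₀, ∀ y ∈ Ioo (a x) (b x), cmp (f x y) m = cmp y (c x)) :
    ContinuousAt c x₀ := by
  have mem_Ioo : ∀ y ∈ Ioo (a x₀) (b x₀), ∀ᶠ x in 𝓝 x₀, y ∈ Ioo (a x) (b x) := fun y hy =>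
    (ha.tendsto.eventually_lt_const hy.1).and (hb.tendsto.eventually_const_lt hy.2)
  refine tendsto_order.2 ⟨fun u hu => ?_, fun u hu => ?_⟩
  · obtain ⟨y, hy, hyc⟩ := exists_between (max_lt hu hc.1)
    have hym : y ∈ Ioo (a x₀) (b x₀) := ⟨(le_max_right _ _).trans_lt hy, hyc.trans hc.2⟩
    have hfy : f x₀ y < m := (lt_iff_lt_of_cmp_eq_cmp (hcmp.self_of_nhds y hym)).2 hyc
    filter_upwards [hcmp, mem_Ioo y hym, (hf y hym).tendsto.eventually_lt_const hfy]
      with x hx hyx hfx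
    exact ((le_max_left _ _).trans_lt hy).trans ((lt_iff_lt_of_cmp_eq_cmp (hx y hyx)).1 hfx)
  · obtain ⟨y, hcy, hy⟩ := exists_between (lt_min hu hc.2)
    have hym : y ∈ Ioo (a x₀) (b x₀) := ⟨hc.1.trans hcy, hy.trans_le (min_le_right _ _)⟩
    have hfy : m < f x₀ y :=
      (lt_iff_lt_of_cmp_eq_cmp (cmp_eq_cmp_symm.1 (hcmp.self_of_nhds y hym))).2 hcy
    filter_upwards [hcmp, mem_Ioo y hym, (hf y hym).tendsto.eventually_const_lt hfy]
      with x hx hyx hfx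
    exact ((lt_iff_lt_of_cmp_eq_cmp (cmp_eq_cmp_symm.1 (hx y hyx))).1 hfx).trans
      (hy.trans_le (min_le_left _ _))

theorem continuousOn_parametric_intervalIntegral {X E : Type*} [TopologicalSpace X]
    [FirstCountableTopology X] [NormedAddCommGroup E] [NormedSpace ℝ E] {S : Set X} {f : X → ℝ → E}
    {s : X → ℝ} {a : ℝ} (hf : ContinuousOn (Function.uncurry f) (S ×ˢ univ))
    (hs : ContinuousOn s S) : ContinuousOn (fun x => ∫ t in a..s x, f x t) S := by
  rw [continuousOn_iff_continuous_domRestrict] at hs ⊢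
  have hf' : Continuous (Function.uncurry fun (x : S) (t : ℝ) => f x t) :=
    hf.comp_continuous (f := fun p : S × ℝ => ((p.1 : X), p.2)) (by fun_prop)
      fun p => ⟨p.1.2, mem_univ _⟩
  exact intervalIntegral.continuous_parametric_intervalIntegral_of_continuous hf' hs

theorem complex_sqrt_sq (z : ℂ) : z.sqrt ^ 2 = z :=
  Complex.cpow_nat_inv_pow z two_ne_zero

theorem re_sqrt (z : ℂ) : z.sqrt.re = √((‖z‖ + z.re) / 2) :=
  Complex.cpow_inv_two_re z

theorem re_sqrt_nonneg (z : ℂ) : 0 ≤ z.sqrt.re := by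
  rw [re_sqrt]; positivity

theorem continuous_re_sqrt : Continuous fun z : ℂ => z.sqrt.re := by
  simp only [re_sqrt]
  fun_prop

theorem im_sqrt_neg {z : ℂ} (hz : z.im ≤ 0) : (-z).sqrt.im = z.sqrt.re := by
  have h : 0 ≤ (-z).im := by simpa using hz
  rw [re_sqrt, Complex.sqrt, Complex.cpow_inv_two_im_eq_sqrt h, norm_neg, Complex.neg_re,
    sub_neg_eq_add]

theorem continuousOn_sqrt_of_im_nonneg : ContinuousOn Complex.sqrt {z | 0 ≤ z.im} := by
  have h : Continuous fun z : ℂ =>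
      ((√((‖z‖ + z.re) / 2) : ℝ) : ℂ) + ((√((‖z‖ - z.re) / 2) : ℝ) : ℂ) * Complex.I := by
    fun_prop
  refine h.continuousOn.congr fun z hz => ?_
  rw [Complex.sqrt_eq_real_add_ite, if_pos hz.out, one_mul]

theorem sqrt_exp_I_mul {t : ℝ} (ht : t ∈ Ioc (-π) π) :
    (Complex.exp (Complex.I * t)).sqrt = Complex.exp (Complex.I * ((t / 2 : ℝ) : ℂ)) := by
  rw [sqrt_eq_exp (Complex.exp_ne_zero _), Complex.log_exp (by simpa using ht.1)
    (by simpa using ht.2)]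
  push_cast
  ring_nf

theorem abs_im_le_two_mul_sqrt_norm_mul_re_sqrt (z : ℂ) : |z.im| ≤ 2 * √‖z‖ * z.sqrt.re := by
  have him : z.im = 2 * z.sqrt.im * z.sqrt.re := by
    conv_lhs => rw [← complex_sqrt_sq z, sq, Complex.mul_im]
    ring
  have hnorm : ‖z.sqrt‖ = √‖z‖ := by
    rw [← Real.sqrt_sq (norm_nonneg z.sqrt), ← norm_pow, complex_sqrt_sq]
  rw [him, abs_mul, abs_mul, abs_of_nonneg (re_sqrt_nonneg z), abs_two, ← hnorm]
  gcongr
  · exact re_sqrt_nonneg z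
  · exact Complex.abs_im_le_norm _

theorem re_sqrt_pos {z : ℂ} (hz : z.im ≠ 0) : 0 < z.sqrt.re :=
  pos_of_mul_pos_right ((abs_pos.2 hz).trans_le (abs_im_le_two_mul_sqrt_norm_mul_re_sqrt z))
    (by positivity)

theorem t0_pos {α : ℝ} (hα : 0 < α) : 0 < t0 α := by
  unfold t0; positivity

theorem t0_lt_pi {α : ℝ} (hα : α ∈ Ioo (0 : ℝ) 2) : t0 α < π := by
  obtain ⟨h0, h2⟩ := hα
  rw [t0, div_lt_iff₀ (by linarith)]
  nlinarith [pi_pos]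

theorem t0_lt_pi_mul {α : ℝ} (hα : 0 < α) : t0 α < π * α := by
  rw [t0, div_lt_iff₀ (by linarith)]
  nlinarith [mul_pos (mul_pos pi_pos hα) hα]

theorem continuousAt_t0 {α : ℝ} (hα : 0 < α) : ContinuousAt t0 α := by
  unfold t0
  exact ContinuousAt.div (by fun_prop) (by fun_prop) (by linarith)

theorem sin_t0_pos {α : ℝ} (hα : α ∈ Ioo (0 : ℝ) 2) : 0 < sin (t0 α) :=
  sin_pos_of_pos_of_lt_pi (t0_pos hα.1) (t0_lt_pi hα)

theorem sin_t0_div_self {α : ℝ} (hα : 0 < α) : sin (t0 α / α) = sin (t0 α / 2) := by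
  rw [← sin_pi_sub]
  congr 1
  unfold t0
  field_simp
  ring

theorem Z0_pos {α θ : ℝ} (hα : α ∈ Ioo (0 : ℝ) 2) (hθ : θ ∈ Ioo 0 π) : 0 < Z0 α θ :=
  rpow_pos_of_pos (div_pos (sin_t0_pos hα) (sin_pos_of_mem_Ioo hθ)) _

theorem Z0_t0 {α : ℝ} (hα : α ∈ Ioo (0 : ℝ) 2) : Z0 α (t0 α) = 1 := by
  rw [Z0, div_self (sin_t0_pos hα).ne', one_rpow]

theorem sin_mul_Z0_rpow {α θ : ℝ} (hα : α ∈ Ioo (0 : ℝ) 2) (hθ : θ ∈ Ioo 0 π) :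
    sin θ * Z0 α θ ^ α = sin (t0 α) := by
  have hs := sin_pos_of_mem_Ioo hθ
  rw [Z0, ← rpow_mul (div_pos (sin_t0_pos hα) hs).le, one_div_mul_cancel hα.1.ne', rpow_one,
    mul_div_cancel₀ _ hs.ne']

theorem continuousOn_Z0 :
    ContinuousOn (fun p : ℝ × ℝ => Z0 p.1 p.2) (Ioi 0 ×ˢ Ioo 0 π) := by
  intro p hp
  have ht0 : ContinuousAt (fun p : ℝ × ℝ => t0 p.1) p :=
    (continuousAt_t0 hp.1).comp continuousAt_fst
  have hbase : ContinuousAt (fun p : ℝ × ℝ => sin (t0 p.1) / sin p.2) p :=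
    (continuous_sin.continuousAt.comp ht0).div (by fun_prop) (sin_pos_of_mem_Ioo hp.2).ne'
  have hexp : ContinuousAt (fun p : ℝ × ℝ => 1 / p.1) p :=
    continuousAt_const.div continuousAt_fst hp.1.out.ne'
  exact (hbase.rpow hexp (Or.inr (one_div_pos.2 hp.1))).continuousWithinAt

theorem tendsto_Z0_atTop {α : ℝ} (hα : α ∈ Ioo (0 : ℝ) 2) :
    Tendsto (Z0 α) (𝓝[<] π) atTop := by
  have hsin : Tendsto sin (𝓝[<] π) (𝓝[>] 0) := by
    refine tendsto_nhdsWithin_iff.2 ⟨?_, ?_⟩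
    · exact sin_pi ▸ (continuous_sin.tendsto π).mono_left nhdsWithin_le_nhds
    · filter_upwards [Ioo_mem_nhdsLT pi_pos] with θ hθ using sin_pos_of_mem_Ioo hθ
  exact (tendsto_rpow_atTop (one_div_pos.2 hα.1)).comp
    (hsin.inv_tendsto_nhdsGT_zero.const_mul_atTop (sin_t0_pos hα))

/-- The function `e^{iθ} t^α - e^{i t₀(α)}` of `t`, whose square root is integrated in the
definition of `ρ_α(θ)`. -/
noncomputable def radicand (α θ t : ℝ) : ℂ :=
  Complex.exp (Complex.I * θ) * ((t ^ α : ℝ) : ℂ) - Complex.exp (Complex.I * (t0 α : ℝ))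

theorem radicand_im (α θ t : ℝ) : (radicand α θ t).im = sin θ * t ^ α - sin (t0 α) := by
  rw [radicand, Complex.sub_im, Complex.im_mul_ofReal, mul_comm Complex.I,
    Complex.exp_ofReal_mul_I_im, mul_comm Complex.I, Complex.exp_ofReal_mul_I_im]

theorem norm_radicand_le (α θ : ℝ) {t : ℝ} (ht : 0 ≤ t) : ‖radicand α θ t‖ ≤ t ^ α + 1 := by
  refine (norm_sub_le _ _).trans_eq ?_
  rw [norm_mul, Complex.norm_exp_I_mul_ofReal, Complex.norm_exp_I_mul_ofReal, Complex.norm_real,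
    norm_of_nonneg (rpow_nonneg ht α), one_mul]

theorem continuousOn_radicand :
    ContinuousOn (fun q : (ℝ × ℝ) × ℝ => radicand q.1.1 q.1.2 q.2) ((Ioi 0 ×ˢ univ) ×ˢ univ) := by
  intro q hq
  have hα : 0 < q.1.1 := hq.1.1
  have ht0 : ContinuousAt (fun q : (ℝ × ℝ) × ℝ => t0 q.1.1) q :=
    (continuousAt_t0 hα).comp (f := fun q : (ℝ × ℝ) × ℝ => q.1.1) (by fun_prop)
  have hpow : ContinuousAt (fun q : (ℝ × ℝ) × ℝ => q.2 ^ q.1.1) q :=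
    ContinuousAt.rpow (by fun_prop) (by fun_prop) (Or.inr hα)
  refine ContinuousAt.continuousWithinAt ?_
  unfold radicand
  fun_prop

theorem continuous_radicand {α : ℝ} (hα : 0 < α) (θ : ℝ) : Continuous (radicand α θ) :=
  continuousOn_radicand.comp_continuous (f := fun t => ((α, θ), t)) (by fun_prop)
    fun _ => ⟨⟨hα, mem_univ _⟩, mem_univ _⟩

theorem continuous_re_sqrt_radicand {α : ℝ} (hα : 0 < α) (θ : ℝ) :
    Continuous fun t => (radicand α θ t).sqrt.re :=
  continuous_re_sqrt.comp (continuous_radicand hα θ)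

section

variable {α θ t : ℝ}

theorem radicand_im_neg (hα : α ∈ Ioo (0 : ℝ) 2) (hθ : θ ∈ Ioo 0 π)
    (ht : t ∈ Ico 0 (Z0 α θ)) : (radicand α θ t).im < 0 := by
  rw [radicand_im, ← sin_mul_Z0_rpow hα hθ, sub_neg]
  exact mul_lt_mul_of_pos_left (rpow_lt_rpow ht.1 ht.2 hα.1) (sin_pos_of_mem_Ioo hθ)

theorem radicand_im_nonpos (hα : α ∈ Ioo (0 : ℝ) 2) (hθ : θ ∈ Ioo 0 π)
    (ht : t ∈ Icc 0 (Z0 α θ)) : (radicand α θ t).im ≤ 0 := by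
  rw [radicand_im, ← sin_mul_Z0_rpow hα hθ, sub_nonpos]
  exact mul_le_mul_of_nonneg_left (rpow_le_rpow ht.1 ht.2 hα.1.le) (sin_pos_of_mem_Ioo hθ).le

/-- The continuous square root `g_θ` of `e^{iθ} t^α - e^{i t₀(α)}` with
`g_θ(0) = -i e^{i t₀(α) / 2}`. The radicand lies in the closed lower half-plane, on the border of
which the principal root is discontinuous, whence the root of its negative. -/
noncomputable def sqrtBranch (α θ t : ℝ) : ℂ :=
  -Complex.I * (-radicand α θ t).sqrt

theorem continuousOn_sqrtBranch (hα : α ∈ Ioo (0 : ℝ) 2) (hθ : θ ∈ Ioo 0 π) :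
    ContinuousOn (sqrtBranch α θ) (Icc 0 (Z0 α θ)) :=
  continuousOn_const.mul (continuousOn_sqrt_of_im_nonneg.comp
    (continuous_radicand hα.1 θ).neg.continuousOn
    fun _ ht => by simpa using radicand_im_nonpos hα hθ ht)

theorem sqrtBranch_sq (α θ t : ℝ) : sqrtBranch α θ t ^ 2 = radicand α θ t := by
  rw [sqrtBranch, mul_pow, complex_sqrt_sq, neg_sq, Complex.I_sq, neg_one_mul, neg_neg]

theorem sqrtBranch_zero (hα : α ∈ Ioo (0 : ℝ) 2) (θ : ℝ) :
    sqrtBranch α θ 0 = -Complex.I * Complex.exp (Complex.I * ((t0 α / 2 : ℝ) : ℂ)) := by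
  have h : t0 α ∈ Ioc (-π) π := ⟨by linarith [t0_pos hα.1, pi_pos], (t0_lt_pi hα).le⟩
  rw [sqrtBranch, radicand, zero_rpow hα.1.ne', Complex.ofReal_zero, mul_zero, zero_sub, neg_neg,
    sqrt_exp_I_mul h]

theorem sqrtBranch_re (hα : α ∈ Ioo (0 : ℝ) 2) (hθ : θ ∈ Ioo 0 π) (ht : t ∈ Icc 0 (Z0 α θ)) :
    (sqrtBranch α θ t).re = (radicand α θ t).sqrt.re := by
  rw [← im_sqrt_neg (radicand_im_nonpos hα hθ ht)]
  simp [sqrtBranch]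

theorem re_integral_sqrtBranch (hα : α ∈ Ioo (0 : ℝ) 2) (hθ : θ ∈ Ioo 0 π) :
    (∫ t in (0 : ℝ)..Z0 α θ, sqrtBranch α θ t).re =
      ∫ t in (0 : ℝ)..Z0 α θ, (radicand α θ t).sqrt.re := by
  have hZ := (Z0_pos hα hθ).le
  have hint := (continuousOn_sqrtBranch hα hθ).intervalIntegrable_of_Icc (μ := volume) hZ
  refine (intervalIntegral.intervalIntegral_re hint).symm.trans
    (intervalIntegral.integral_congr fun t ht => ?_)
  exact sqrtBranch_re hα hθ (uIcc_of_le hZ ▸ ht)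

end

/-- The integral `∫₀¹ √(1 - ξ^α) dξ` in the definition of `ρ_α`. -/
noncomputable def sqrtIntegral (α : ℝ) : ℝ :=
  ∫ ξ in (0 : ℝ)..1, √(1 - ξ ^ α)

theorem continuousOn_sqrtIntegral : ContinuousOn sqrtIntegral (Ioi 0) := by
  refine continuousOn_parametric_intervalIntegral (fun q hq => ?_) continuousOn_const
  have hpow : ContinuousAt (fun q : ℝ × ℝ => q.2 ^ q.1) q :=
    ContinuousAt.rpow (by fun_prop) (by fun_prop) (Or.inr hq.1)
  exact (continuousAt_const.sub hpow).sqrt.continuousWithinAt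

section

variable {α : ℝ}

theorem continuous_sqrt_one_sub_rpow (hα : 0 < α) : Continuous fun ξ : ℝ => √(1 - ξ ^ α) :=
  (continuous_const.sub (continuous_rpow_const hα.le)).sqrt

theorem sqrtIntegral_pos (hα : 0 < α) : 0 < sqrtIntegral α :=
  intervalIntegral.intervalIntegral_pos_of_pos_on
    ((continuous_sqrt_one_sub_rpow hα).intervalIntegrable _ _)
    (fun _ hξ => sqrt_pos.2 (sub_pos.2 (rpow_lt_one hξ.1.le hξ.2 hα))) zero_lt_one

theorem sqrtIntegral_le_one (hα : 0 < α) : sqrtIntegral α ≤ 1 :=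
  calc sqrtIntegral α ≤ ∫ _ in (0 : ℝ)..1, (1 : ℝ) :=
        intervalIntegral.integral_mono_on zero_le_one
          ((continuous_sqrt_one_sub_rpow hα).intervalIntegrable _ _) intervalIntegrable_const
          fun ξ hξ => sqrt_le_one.2 (sub_le_self _ (rpow_nonneg hξ.1 α))
    _ = 1 := by simp

end

/-- The value of `ρ_α(θ)`. The integrand is the real part of the principal square root, which is
continuous on all of `ℂ` and agrees with `Re g_θ` on `[0, Z₀(θ)]`. -/
noncomputable def explicitRho (α θ : ℝ) : ℝ :=
  (∫ t in (0 : ℝ)..Z0 α θ, (radicand α θ t).sqrt.re) - 2 * sin (θ / α) * sqrtIntegral α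

theorem continuousOn_explicitRho :
    ContinuousOn (Function.uncurry explicitRho) (Ioi 0 ×ˢ Ioo 0 π) := by
  have hint : ContinuousOn
      (fun p : ℝ × ℝ => ∫ t in (0 : ℝ)..Z0 p.1 p.2, (radicand p.1 p.2 t).sqrt.re)
      (Ioi 0 ×ˢ Ioo 0 π) :=
    continuousOn_parametric_intervalIntegral
      (continuous_re_sqrt.comp_continuousOn (continuousOn_radicand.mono
        (prod_mono_left (prod_mono_right (subset_univ _))))) continuousOn_Z0
  have hsin : ContinuousOn (fun p : ℝ × ℝ => sin (p.2 / p.1)) (Ioi 0 ×ˢ Ioo 0 π) :=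
    continuous_sin.comp_continuousOn
      (continuousOn_snd.div continuousOn_fst fun _ hp => hp.1.out.ne')
  exact hint.sub ((continuousOn_const.mul hsin).mul
    (continuousOn_sqrtIntegral.comp continuousOn_fst fun _ hp => hp.1))

section

variable {α θ : ℝ}

theorem re_sqrt_radicand_t0 (hα : α ∈ Ioo (0 : ℝ) 2) {t : ℝ} (ht : t ∈ Icc (0 : ℝ) 1) :
    (radicand α (t0 α) t).sqrt.re = sin (t0 α / 2) * √(1 - t ^ α) := by
  have hu : 0 ≤ 1 - t ^ α := sub_nonneg.2 (rpow_le_one ht.1 ht.2 hα.1.le)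
  have hrad : radicand α (t0 α) t = -(Complex.exp (t0 α * Complex.I) * ((1 - t ^ α : ℝ) : ℂ)) := by
    rw [radicand, mul_comm Complex.I]; push_cast; ring
  rw [re_sqrt, hrad, norm_neg, norm_mul, Complex.norm_exp_ofReal_mul_I, Complex.norm_real,
    norm_of_nonneg hu, Complex.neg_re, Complex.re_mul_ofReal, Complex.exp_ofReal_mul_I_re,
    sin_half_eq_sqrt (t0_pos hα.1).le (by linarith [t0_lt_pi hα, pi_pos]), ← sqrt_mul' _ hu]
  congr 1
  ring

theorem explicitRho_t0 (hα : α ∈ Ioo (0 : ℝ) 2) :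
    explicitRho α (t0 α) = -(sin (t0 α / 2) * sqrtIntegral α) := by
  have hint : ∫ t in (0 : ℝ)..1, (radicand α (t0 α) t).sqrt.re =
      sin (t0 α / 2) * sqrtIntegral α := by
    rw [sqrtIntegral, ← intervalIntegral.integral_const_mul]
    exact intervalIntegral.integral_congr fun t ht =>
      re_sqrt_radicand_t0 hα (by rwa [uIcc_of_le zero_le_one] at ht)
  rw [explicitRho, Z0_t0 hα, hint, sin_t0_div_self hα.1]
  ring

theorem explicitRho_t0_neg (hα : α ∈ Ioo (0 : ℝ) 2) : explicitRho α (t0 α) < 0 := by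
  rw [explicitRho_t0 hα, neg_lt_zero]
  have h0 := t0_pos hα.1
  exact mul_pos (sin_pos_of_pos_of_lt_pi (by linarith) (by linarith [t0_lt_pi hα]))
    (sqrtIntegral_pos hα.1)

theorem explicitRho_pi_mul_pos (hα : α ∈ Ioo (0 : ℝ) 1) : 0 < explicitRho α (π * α) := by
  have hα' : α ∈ Ioo (0 : ℝ) 2 := ⟨hα.1, by linarith [hα.2]⟩
  have hθ : π * α ∈ Ioo 0 π := ⟨mul_pos pi_pos hα.1, mul_lt_of_lt_one_right pi_pos hα.2⟩
  rw [explicitRho, mul_div_cancel_right₀ _ hα.1.ne', sin_pi, mul_zero, zero_mul, sub_zero]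
  exact intervalIntegral.intervalIntegral_pos_of_pos_on
    ((continuous_re_sqrt_radicand hα.1 _).intervalIntegrable _ _)
    (fun t ht => re_sqrt_pos (radicand_im_neg hα' hθ ⟨ht.1.le, ht.2⟩).ne) (Z0_pos hα' hθ)

theorem le_re_sqrt_radicand (hα : α ∈ Ioo (0 : ℝ) 2) (hθ : θ ∈ Ioo 0 π) (hZ : 1 ≤ Z0 α θ) {t : ℝ}
    (ht : t ∈ Icc 0 (Z0 α θ / 2)) :
    sin (t0 α) * (1 - (1 / 2) ^ α) / 4 * Z0 α θ ^ (-(α / 2)) ≤ (radicand α θ t).sqrt.re := by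
  have hZ0 := Z0_pos hα hθ
  have him : sin (t0 α) * (1 - (1 / 2) ^ α) ≤ |(radicand α θ t).im| := by
    have hpow : t ^ α ≤ Z0 α θ ^ α * (1 / 2) ^ α := by
      rw [← mul_rpow hZ0.le one_half_pos.le, mul_one_div]
      exact rpow_le_rpow ht.1 ht.2 hα.1.le
    refine le_trans ?_ (neg_le_abs _)
    rw [radicand_im, ← sin_mul_Z0_rpow hα hθ]
    linarith [mul_le_mul_of_nonneg_left hpow (sin_pos_of_mem_Ioo hθ).le]
  have hnorm : √‖radicand α θ t‖ ≤ 2 * Z0 α θ ^ (α / 2) := by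
    have hsq : (Z0 α θ ^ (α / 2)) ^ 2 = Z0 α θ ^ α := by
      rw [← rpow_mul_natCast hZ0.le, Nat.cast_two, div_mul_cancel₀ _ two_ne_zero]
    have hpow : t ^ α ≤ Z0 α θ ^ α := rpow_le_rpow ht.1 (by linarith [ht.2]) hα.1.le
    rw [sqrt_le_left (by positivity), mul_pow, hsq]
    linarith [norm_radicand_le α θ ht.1, one_le_rpow hZ hα.1.le]
  have hbound := him.trans (abs_im_le_two_mul_sqrt_norm_mul_re_sqrt _)
  rw [rpow_neg hZ0.le, ← div_eq_mul_inv, div_le_iff₀ (by positivity)]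
  linarith [mul_le_mul_of_nonneg_right hnorm (re_sqrt_nonneg (radicand α θ t))]

theorem le_explicitRho (hα : α ∈ Ioo (0 : ℝ) 2) (hθ : θ ∈ Ioo 0 π) (hZ : 1 ≤ Z0 α θ) :
    sin (t0 α) * (1 - (1 / 2) ^ α) / 8 * Z0 α θ ^ (1 - α / 2) - 2 ≤ explicitRho α θ := by
  have hZ0 := Z0_pos hα hθ
  have hc := continuous_re_sqrt_radicand hα.1 θ
  refine sub_le_sub ?_ ?_
  · calc sin (t0 α) * (1 - (1 / 2) ^ α) / 8 * Z0 α θ ^ (1 - α / 2)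
        = ∫ _ in (0 : ℝ)..Z0 α θ / 2,
            sin (t0 α) * (1 - (1 / 2) ^ α) / 4 * Z0 α θ ^ (-(α / 2)) := by
          rw [intervalIntegral.integral_const, smul_eq_mul, sub_zero, sub_eq_add_neg 1 (α / 2),
            rpow_add hZ0, rpow_one]
          ring
      _ ≤ ∫ t in (0 : ℝ)..Z0 α θ / 2, (radicand α θ t).sqrt.re :=
          intervalIntegral.integral_mono_on (by linarith) intervalIntegrable_const
            (hc.intervalIntegrable _ _) fun _ ht => le_re_sqrt_radicand hα hθ hZ ht
      _ ≤ ∫ t in (0 : ℝ)..Z0 α θ, (radicand α θ t).sqrt.re :=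
          intervalIntegral.integral_mono_interval le_rfl (by linarith) (by linarith)
            (Eventually.of_forall fun _ => re_sqrt_nonneg _) (hc.intervalIntegrable _ _)
  · have h := mul_le_mul (sin_le_one (θ / α)) (sqrtIntegral_le_one hα.1)
      (sqrtIntegral_pos hα.1).le zero_le_one
    linarith

theorem tendsto_explicitRho_atTop (hα : α ∈ Ioo (0 : ℝ) 2) :
    Tendsto (explicitRho α) (𝓝[<] π) atTop := by
  have hcoeff : 0 < sin (t0 α) * (1 - (1 / 2) ^ α) / 8 := by
    have := sin_t0_pos hα
    have := sub_pos.2 (rpow_lt_one one_half_pos.le one_half_lt_one hα.1)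
    positivity
  have hexp : 0 < 1 - α / 2 := by linarith [hα.2]
  refine tendsto_atTop_mono' _ ?_ (tendsto_atTop_add_const_right _ (-2)
    (((tendsto_rpow_atTop hexp).comp (tendsto_Z0_atTop hα)).const_mul_atTop hcoeff))
  filter_upwards [Ioo_mem_nhdsLT pi_pos, (tendsto_Z0_atTop hα).eventually_ge_atTop 1]
    with θ hθ hZ using le_explicitRho hα hθ hZ

theorem eventually_explicitRho_pos (hα : α ∈ Ioo (0 : ℝ) 2) :
    ∀ᶠ θ in 𝓝[<] min π (π * α), 0 < explicitRho α θ := by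
  rcases lt_or_ge α 1 with h1 | h1
  · have hlt : π * α < π := mul_lt_of_lt_one_right pi_pos h1
    rw [min_eq_right hlt.le]
    have hcont : ContinuousAt (explicitRho α) (π * α) :=
      (continuousOn_explicitRho.uncurry_left α hα.1).continuousAt
        (Ioo_mem_nhds (mul_pos pi_pos hα.1) hlt)
    exact (hcont.tendsto.mono_left nhdsWithin_le_nhds).eventually_const_lt
      (explicitRho_pi_mul_pos ⟨hα.1, h1⟩)
  · rw [min_eq_left (le_mul_of_one_le_right pi_pos.le h1)]
    exact (tendsto_explicitRho_atTop hα).eventually_gt_atTop 0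

theorem exists_explicitRho_pos (hα : α ∈ Ioo (0 : ℝ) 2) :
    ∃ θ ∈ Ioo (t0 α) (min π (π * α)), 0 < explicitRho α θ :=
  have hIoo := Ioo_mem_nhdsLT (lt_min (t0_lt_pi hα) (t0_lt_pi_mul hα.1))
  ((eventually_of_mem hIoo fun _ hθ => hθ).and (eventually_explicitRho_pos hα)).exists

theorem Ico_t0_subset_Ioo (hα : 0 < α) : Ico (t0 α) (min π (π * α)) ⊆ Ioo 0 π := fun _ hθ =>
  ⟨(t0_pos hα).trans_le hθ.1, hθ.2.trans_le (min_le_left _ _)⟩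

end

/-- the function `α ↦ θ₀(α)` is continuous on `(0,2)`, where `θ₀(α)` is the
unique zero of `ρ_α` in `(t₀(α), min(π, πα))`, and `ρ α` is any family of functions
satisfying the defining property of `ρ_α` on `[t₀(α), min(π, πα))`. -/
theorem stmt1 (ρ : ℝ → ℝ → ℝ) (θ₀ : ℝ → ℝ)
    (hρ : ∀ α ∈ Set.Ioo (0 : ℝ) 2, ∀ θ ∈ Set.Ico (t0 α) (min Real.pi (Real.pi * α)),
      ∀ g : ℝ → ℂ,
      ContinuousOn g (Set.Icc 0 (Z0 α θ)) →
      (∀ t ∈ Set.Icc (0 : ℝ) (Z0 α θ),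
        g t ^ 2 = Complex.exp (Complex.I * (θ : ℂ)) * ((t ^ α : ℝ) : ℂ)
          - Complex.exp (Complex.I * ((t0 α : ℝ) : ℂ))) →
      g 0 = -Complex.I * Complex.exp (Complex.I * ((t0 α / 2 : ℝ) : ℂ)) →
      ρ α θ = (∫ t in (0 : ℝ)..(Z0 α θ), g t).re
        - 2 * Real.sin (θ / α) * ∫ ξ in (0 : ℝ)..1, Real.sqrt (1 - ξ ^ α))
    (hθ₀ : ∀ α ∈ Set.Ioo (0 : ℝ) 2,
      θ₀ α ∈ Set.Ioo (t0 α) (min Real.pi (Real.pi * α)) ∧ ρ α (θ₀ α) = 0 ∧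
      ∀ θ ∈ Set.Ioo (t0 α) (min Real.pi (Real.pi * α)), ρ α θ = 0 → θ = θ₀ α) :
    ContinuousOn θ₀ (Set.Ioo (0 : ℝ) 2) := by
  have hρ_eq : ∀ α ∈ Ioo (0 : ℝ) 2, ∀ θ ∈ Ioo (t0 α) (min π (π * α)), ρ α θ = explicitRho α θ := by
    intro α hα θ hθ
    have hθπ := Ico_t0_subset_Ioo hα.1 (Ioo_subset_Ico_self hθ)
    rw [hρ α hα θ (Ioo_subset_Ico_self hθ) (sqrtBranch α θ) (continuousOn_sqrtBranch hα hθπ)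
      (fun t _ => sqrtBranch_sq α θ t) (sqrtBranch_zero hα θ), re_integral_sqrtBranch hα hθπ]
    rfl
  have hsign : ∀ α ∈ Ioo (0 : ℝ) 2, ∀ θ ∈ Ioo (t0 α) (min π (π * α)),
      cmp (explicitRho α θ) 0 = cmp θ (θ₀ α) := fun α hα =>
    cmp_eq_cmp_of_unique_eq
      ((continuousOn_explicitRho.uncurry_left α hα.1).mono (Ico_t0_subset_Ioo hα.1))
      (explicitRho_t0_neg hα) (exists_explicitRho_pos hα)
      fun θ hθ h => (hθ₀ α hα).2.2 θ hθ ((hρ_eq α hα θ hθ).trans h)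
  refine fun α hα => ContinuousAt.continuousWithinAt ?_
  exact continuousAt_of_cmp_eq_cmp (continuousAt_t0 hα.1) (by fun_prop) (hθ₀ α hα).1
    (fun θ hθ => (continuousOn_explicitRho.uncurry_right θ
      (Ico_t0_subset_Ioo hα.1 (Ioo_subset_Ico_self hθ))).continuousAt (Ioi_mem_nhds hα.1))
    (eventually_of_mem (isOpen_Ioo.mem_nhds hα) hsign)
end

section
/- Let α > 0 and let c ∈ ℂ be nonzero with |arg c| < π. Then λ ∈ ℂ is an eigenvalue of 𝓛_{c,α} (i.e., some eigenfunction with eigenvalue λ exists) if and only if c^{−2/(α+2)}·λ (principal branch power) is an eigenvalue of 𝓛_{1,α}; moreover, every eigenvalue of 𝓛_{1,α} is a positive real number. Consequently all eigenvalues of 𝓛_{c,α} have the form λ = c^{2/(α+2)}·τ with τ > 0 independent of c. -/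
open MeasureTheory Set

/-- `y` is an eigenfunction of the Dirichlet operator `𝓛_{c,α} = −d²/dx² + c·x^α` on
`L²(0,∞)` with eigenvalue `lam`. -/
def IsEigenfunction (α : ℝ) (c lam : ℂ) (y : ℝ → ℂ) : Prop :=
  ContinuousOn y (Set.Ici 0) ∧
  y 0 = 0 ∧
  (∃ x ≥ (0 : ℝ), y x ≠ 0) ∧
  (∃ y' : ℝ → ℂ,
    (∀ x ∈ Set.Ioi (0 : ℝ), HasDerivAt y (y' x) x) ∧
    (∀ x ∈ Set.Ioi (0 : ℝ), HasDerivAt y' ((c * ((x ^ α : ℝ) : ℂ) - lam) * y x) x)) ∧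
  MeasureTheory.IntegrableOn (fun x => ‖y x‖ ^ 2) (Set.Ioi 0)

/-- `lam` is an eigenvalue of `𝓛_{c,α}`. -/
def IsEigenvalue (α : ℝ) (c lam : ℂ) : Prop := ∃ y : ℝ → ℂ, IsEigenfunction α c lam y

/-!
For `μ ∈ ℂ`, the solution `w` of `w'' = (z ^ α - μ) w` with `w(z) ~ z` at the origin lives on the
Riemann surface of the logarithm, and `w (exp ζ)` is entire in `ζ`. Its restriction to the ray
through `exp s` is the Dirichlet solution of the equation with coupling `exp ((α + 2) s)` and
spectral parameter `μ exp (2 s)`, so eigenvalues correspond to rays on which `w` is square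
integrable, and the claim is that the ray does not matter inside the sector
`(α + 2) |arg z| < π`. By monotonicity of a rotated flux `Re (e conj(y) y')`, square integrability
on a ray of the sector is the same as decay like `exp (-κ |z| ^ (α / 2 + 1))`. The power series
bounds the growth of `w` by the exponential of the same power, hence Phragmén–Lindelöf carries the
decay to neighbouring rays, and the sector is connected. Positivity of the eigenvalues for `c = 1`
is again the monotonicity of a flux: if `τ` is not positive, a suitable `e` makes
`Re (e (x ^ α - τ))` positive.
-/

open Asymptotics Filter Topology
open scoped ComplexConjugate

section RealAnalysis

lemma monotoneOn_Ici_of_hasDerivAt_nonneg {f f' : ℝ → ℝ} {a : ℝ}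
    (hf : ∀ x, a ≤ x → HasDerivAt f (f' x) x) (hf' : ∀ x, a ≤ x → 0 ≤ f' x) :
    MonotoneOn f (Ici a) :=
  monotoneOn_of_hasDerivWithinAt_nonneg (f' := f') (convex_Ici a)
    (fun x hx => (hf x hx).continuousAt.continuousWithinAt)
    (fun x hx => (hf x (interior_subset hx)).hasDerivWithinAt)
    fun x hx => hf' x (interior_subset hx)

lemma not_integrableOn_Ioi_of_le {f : ℝ → ℝ} {a δ : ℝ} (hδ : 0 < δ) (hf : ∀ x, a < x → δ ≤ f x) :
    ¬ IntegrableOn f (Ioi a) := by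
  intro hint
  have hconst : IntegrableOn (fun _ => δ) (Ioi a) := by
    refine hint.mono' aestronglyMeasurable_const ((ae_restrict_iff' measurableSet_Ioi).2 ?_)
    exact Eventually.of_forall fun x hx => (Real.norm_of_nonneg hδ.le).trans_le (hf x hx)
  simp [integrableOn_const_iff, hδ.ne'] at hconst

lemma le_neg_of_monotoneOn_add {V M : ℝ → ℝ} {a x : ℝ} (hV : IntegrableOn V (Ioi a))
    (hmono : MonotoneOn (V + M) (Ici a)) (hM : ∀ t, a ≤ t → M t ≤ 0) (hx : a ≤ x) :
    V x ≤ -M x := by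
  by_contra! h
  refine not_integrableOn_Ioi_of_le (δ := V x + M x) (by linarith) (fun t ht => ?_)
    (hV.mono_set (Ioi_subset_Ioi hx))
  have hle : V x + M x ≤ V t + M t := hmono hx (hx.trans ht.le) ht.le
  linarith [hM t (hx.trans ht.le)]

lemma integrableOn_Ioi_deriv_of_nonneg_of_le {f f' : ℝ → ℝ} {a B : ℝ}
    (hf : ∀ x, a ≤ x → HasDerivAt f (f' x) x) (hf' : ∀ x, a ≤ x → 0 ≤ f' x)
    (hB : ∀ x, a ≤ x → f x ≤ B) : IntegrableOn f' (Ioi a) := by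
  have hmono : Monotone fun x => f (max a x) := fun x z hxz =>
    monotoneOn_Ici_of_hasDerivAt_nonneg hf hf' (le_max_left a x) (le_max_left a z)
      (max_le_max_left a hxz)
  have hlim := tendsto_atTop_ciSup hmono
    ⟨B, forall_mem_range.2 fun x => hB _ (le_max_left a x)⟩
  refine integrableOn_Ioi_deriv_of_nonneg' (fun x hx => hf x hx) (fun x hx => hf' x (le_of_lt hx))
    (hlim.congr' ?_)
  filter_upwards [eventually_ge_atTop a] with x hx using by rw [max_eq_right hx]

/-- The idea: `-1 / N` is increasing and bounded above, so `N' / N ^ 2` is integrable; but its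
product with `V` is at least `κ`, so the sum of the two stays away from `0`. -/
lemma not_integrableOn_Ioi_of_sq_le_deriv_mul {N N' V : ℝ → ℝ} {a κ : ℝ} (hκ : 0 < κ)
    (hN : ∀ x, a ≤ x → HasDerivAt N (N' x) x) (hN' : ∀ x, a ≤ x → 0 ≤ N' x) (hNa : 0 < N a)
    (hle : ∀ x, a ≤ x → κ * N x ^ 2 ≤ N' x * V x) : ¬ IntegrableOn V (Ioi a) := by
  intro hV
  have hpos : ∀ x, a ≤ x → 0 < N x := fun x hx =>
    hNa.trans_le (monotoneOn_Ici_of_hasDerivAt_nonneg hN hN' self_mem_Ici hx hx)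
  have hinv : IntegrableOn (fun x => N' x / N x ^ 2) (Ioi a) := by
    refine integrableOn_Ioi_deriv_of_nonneg_of_le (f := fun x => -(N x)⁻¹) (B := 0)
      (fun x hx => ?_) (fun x hx => div_nonneg (hN' x hx) (sq_nonneg _))
      fun x hx => neg_nonpos.2 (inv_pos.2 (hpos x hx)).le
    simpa [neg_div] using ((hN x hx).fun_inv (hpos x hx).ne').fun_neg
  refine not_integrableOn_Ioi_of_le (Real.sqrt_pos.2 hκ) (fun x hx => ?_) (hinv.add hV)
  have hNx := hpos x hx.le
  have hκ_le : κ ≤ N' x / N x ^ 2 * V x := by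
    rw [div_mul_eq_mul_div, le_div_iff₀ (by positivity)]
    exact hle x hx.le
  have hquot : 0 ≤ N' x / N x ^ 2 := div_nonneg (hN' x hx.le) (sq_nonneg _)
  have hVx : 0 ≤ V x := (pos_of_mul_pos_right (hκ.trans_le hκ_le) hquot).le
  refine Real.sqrt_le_iff.2 ⟨add_nonneg hquot hVx, ?_⟩
  simp only [Pi.add_apply]
  nlinarith [sq_nonneg (N' x / N x ^ 2), sq_nonneg (V x)]

lemma exists_tendsto_nhdsGT_of_norm_deriv_le {E : Type*} [NormedAddCommGroup E] [NormedSpace ℝ E]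
    [CompleteSpace E] {f f' : ℝ → E} {a b C : ℝ} (hab : a < b)
    (hf : ∀ x ∈ Ioo a b, HasDerivAt f (f' x) x) (hC : ∀ x ∈ Ioo a b, ‖f' x‖ ≤ C) :
    ∃ d, Tendsto f (𝓝[>] a) (𝓝 d) := by
  have hlip : LipschitzOnWith C.toNNReal f (Ioo a b) :=
    (convex_Ioo a b).lipschitzOnWith_of_nnnorm_hasDerivWithin_le
      (fun x hx => (hf x hx).hasDerivWithinAt) fun x hx => by
        rw [← NNReal.coe_le_coe]
        exact (hC x hx).trans (Real.le_coe_toNNReal C)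
  rw [← nhdsWithin_Ioo_eq_nhdsGT hab]
  have : (𝓝[Ioo a b] a).NeBot := left_nhdsWithin_Ioo_neBot hab
  exact cauchy_map_iff_exists_tendsto.1 ((cauchy_nhds.mono nhdsWithin_le_nhds).map_of_le
    hlip.uniformContinuousOn inf_le_right)

end RealAnalysis

/-- `y` solves `y'' = q y` on `(0, ∞)`, with derivative `y'`. -/
structure IsSchrodingerSolution (q y y' : ℝ → ℂ) : Prop where
  hasDerivAt : ∀ x, 0 < x → HasDerivAt y (y' x) x
  hasDerivAt_deriv : ∀ x, 0 < x → HasDerivAt y' (q x * y x) x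

namespace IsSchrodingerSolution

variable {q y y' u u' : ℝ → ℂ}

lemma continuousOn (h : IsSchrodingerSolution q y y') : ContinuousOn y (Ioi 0) :=
  fun x hx => (h.hasDerivAt x hx).continuousAt.continuousWithinAt

lemma sub (h : IsSchrodingerSolution q y y') (hu : IsSchrodingerSolution q u u') :
    IsSchrodingerSolution q (fun x => y x - u x) fun x => y' x - u' x where
  hasDerivAt x hx := (h.hasDerivAt x hx).fun_sub (hu.hasDerivAt x hx)
  hasDerivAt_deriv x hx := by
    simpa [mul_sub] using (h.hasDerivAt_deriv x hx).fun_sub (hu.hasDerivAt_deriv x hx)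

lemma const_mul (c : ℂ) (h : IsSchrodingerSolution q y y') :
    IsSchrodingerSolution q (fun x => c * y x) fun x => c * y' x where
  hasDerivAt x hx := (h.hasDerivAt x hx).const_mul c
  hasDerivAt_deriv x hx := by
    simpa [mul_left_comm] using (h.hasDerivAt_deriv x hx).const_mul c

lemma congr (h : IsSchrodingerSolution q u u') (hyu : EqOn y u (Ioi 0)) :
    IsSchrodingerSolution q y u' where
  hasDerivAt x hx :=
    (h.hasDerivAt x hx).congr_of_eventuallyEq (hyu.eventuallyEq_of_mem (Ioi_mem_nhds hx))
  hasDerivAt_deriv x hx := by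
    rw [hyu hx]
    exact h.hasDerivAt_deriv x hx

lemma exists_ne_zero (h : IsSchrodingerSolution q u u') {d : ℂ}
    (hu' : Tendsto u' (𝓝[>] 0) (𝓝 d)) (hd : d ≠ 0) : ∃ x, 0 < x ∧ u x ≠ 0 := by
  by_contra! hzero
  have hu'0 : EqOn u' 0 (Ioi 0) := fun x hx => (h.hasDerivAt x hx).unique <|
    (hasDerivAt_const x 0).congr_of_eventuallyEq
      (EqOn.eventuallyEq_of_mem (g := fun _ => 0) hzero (Ioi_mem_nhds hx))
  exact hd (tendsto_nhds_unique hu'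
    (tendsto_const_nhds.congr' (hu'0.symm.eventuallyEq_of_mem self_mem_nhdsWithin)))

lemma exists_tendsto_deriv_zero (h : IsSchrodingerSolution q y y') (hq : ContinuousOn q (Ici 0))
    (hy : ContinuousOn y (Ici 0)) : ∃ d, Tendsto y' (𝓝[>] 0) (𝓝 d) := by
  obtain ⟨C, hC⟩ := isCompact_Icc.exists_bound_of_continuousOn
    ((hq.mul hy).mono (Icc_subset_Ici_self : Icc (0 : ℝ) 1 ⊆ _))
  exact exists_tendsto_nhdsGT_of_norm_deriv_le one_pos (fun x hx => h.hasDerivAt_deriv x hx.1)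
    fun x hx => hC x (Ioo_subset_Icc_self hx)

lemma norm_prodMk_le_exp (h : IsSchrodingerSolution q y y') {a b K : ℝ} (ha : 0 < a)
    (hab : a ≤ b) (hK : ∀ x ∈ Icc a b, max 1 ‖q x‖ ≤ K) :
    ‖(y b, y' b)‖ ≤ ‖(y a, y' a)‖ * Real.exp (K * (b - a)) := by
  have hpos : ∀ x ∈ Icc a b, 0 < x := fun x hx => ha.trans_le hx.1
  have hderiv : ∀ x ∈ Icc a b, HasDerivAt (fun t => (y t, y' t)) (y' x, q x * y x) x := fun x hx =>
    (h.hasDerivAt x (hpos x hx)).prodMk (h.hasDerivAt_deriv x (hpos x hx))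
  have hbound : ∀ x ∈ Ico a b, ‖(y' x, q x * y x)‖ ≤ K * ‖(y x, y' x)‖ + 0 := fun x hx => by
    have hKx := hK x (Ico_subset_Icc_self hx)
    rw [add_zero, Prod.norm_mk, norm_mul]
    refine max_le ?_ ?_
    · exact (norm_snd_le (y x, y' x)).trans
        (le_mul_of_one_le_left (norm_nonneg _) ((le_max_left _ _).trans hKx))
    · exact mul_le_mul ((le_max_right _ _).trans hKx) (norm_fst_le (y x, y' x)) (norm_nonneg _)
        (zero_le_one.trans ((le_max_left _ _).trans hKx))
  have hgronwall := norm_le_gronwallBound_of_norm_deriv_right_le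
    (fun x hx => (hderiv x hx).continuousAt.continuousWithinAt)
    (fun x hx => (hderiv x (Ico_subset_Icc_self hx)).hasDerivWithinAt) le_rfl hbound b
    (right_mem_Icc.2 hab)
  rwa [gronwallBound_ε0] at hgronwall

lemma eqOn_zero_of_tendsto_zero (h : IsSchrodingerSolution q y y') (hq : ContinuousOn q (Ici 0))
    (hy : Tendsto y (𝓝[>] 0) (𝓝 0)) (hy' : Tendsto y' (𝓝[>] 0) (𝓝 0)) : EqOn y 0 (Ioi 0) := by
  intro x hx
  obtain ⟨C, hC⟩ := isCompact_Icc.exists_bound_of_continuousOn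
    (hq.mono (Icc_subset_Ici_self : Icc 0 x ⊆ _))
  set K := max 1 C
  have hlim : Tendsto (fun a => ‖(y a, y' a)‖ * Real.exp (K * (x - a))) (𝓝[>] 0) (𝓝 0) := by
    have hexp : Tendsto (fun a => Real.exp (K * (x - a))) (𝓝[>] 0) (𝓝 (Real.exp (K * (x - 0)))) :=
      (Continuous.tendsto (by fun_prop) 0).mono_left nhdsWithin_le_nhds
    simpa using (hy.prodMk_nhds hy').norm.mul hexp
  refine norm_le_zero_iff.1 (ge_of_tendsto hlim ?_)
  filter_upwards [Ioo_mem_nhdsGT hx] with a ha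
  refine (norm_fst_le (y x, y' x)).trans (h.norm_prodMk_le_exp ha.1 ha.2.le fun t ht => ?_)
  exact max_le_max_left 1 (hC t ⟨ha.1.le.trans ht.1, ht.2⟩)

lemma eqOn_const_mul_of_tendsto (h : IsSchrodingerSolution q y y')
    (hu : IsSchrodingerSolution q u u') (hq : ContinuousOn q (Ici 0))
    (hy : Tendsto y (𝓝[>] 0) (𝓝 0)) (hu0 : Tendsto u (𝓝[>] 0) (𝓝 0)) {d d' : ℂ} (hd' : d' ≠ 0)
    (hy' : Tendsto y' (𝓝[>] 0) (𝓝 d)) (hu' : Tendsto u' (𝓝[>] 0) (𝓝 d')) :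
    EqOn y (fun x => d / d' * u x) (Ioi 0) := by
  have hzero := (h.sub (hu.const_mul (d / d'))).eqOn_zero_of_tendsto_zero hq
    (by simpa using hy.sub (hu0.const_mul (d / d')))
    (by simpa [hd'] using hy'.sub (hu'.const_mul (d / d')))
  exact fun x hx => sub_eq_zero.1 (hzero hx)

end IsSchrodingerSolution

section Eigenvalue

variable {α : ℝ} {c lam : ℂ}

/-- The potential `c x ^ α - lam` of the eigenvalue equation `y'' = (c x ^ α - lam) y`. -/
noncomputable def powerPotential (α : ℝ) (c lam : ℂ) (x : ℝ) : ℂ := c * ((x ^ α : ℝ) : ℂ) - lam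

lemma continuous_powerPotential (hα : 0 ≤ α) : Continuous (powerPotential α c lam) :=
  (continuous_const.mul (Complex.continuous_ofReal.comp (Real.continuous_rpow_const hα))).sub
    continuous_const

lemma IsEigenfunction.exists_isSchrodingerSolution {y : ℝ → ℂ} (h : IsEigenfunction α c lam y) :
    ∃ y', IsSchrodingerSolution (powerPotential α c lam) y y' := by
  obtain ⟨y', hy, hy'⟩ := h.2.2.2.1
  exact ⟨y', hy, hy'⟩

lemma IsEigenfunction.tendsto_zero {y : ℝ → ℂ} (h : IsEigenfunction α c lam y) :
    Tendsto y (𝓝[>] 0) (𝓝 0) := by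
  simpa [ContinuousWithinAt, h.2.1] using (h.1 0 self_mem_Ici).mono Ioi_subset_Ici_self

lemma IsEigenfunction.exists_pos_ne_zero {y : ℝ → ℂ} (h : IsEigenfunction α c lam y) :
    ∃ x, 0 < x ∧ y x ≠ 0 := by
  obtain ⟨x, hx, hyx⟩ := h.2.2.1
  exact ⟨x, lt_of_le_of_ne hx fun h0 => hyx (h0 ▸ h.2.1), hyx⟩

lemma isEigenfunction_indicator {u u' : ℝ → ℂ}
    (hsol : IsSchrodingerSolution (powerPotential α c lam) u u') (hu : Tendsto u (𝓝[>] 0) (𝓝 0))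
    {x : ℝ} (hx : 0 < x) (hux : u x ≠ 0) (hL2 : IntegrableOn (fun x => ‖u x‖ ^ 2) (Ioi 0)) :
    IsEigenfunction α c lam ((Ioi 0).indicator u) := by
  have heq : EqOn ((Ioi 0).indicator u) u (Ioi 0) := eqOn_indicator
  have hzero : (Ioi 0).indicator u 0 = 0 := by simp
  have hcont : ContinuousOn ((Ioi 0).indicator u) (Ici 0) := by
    intro t ht
    rcases (mem_Ici.1 ht).eq_or_lt with rfl | ht
    · rw [← Ioi_insert, continuousWithinAt_insert_self, ContinuousWithinAt, hzero]
      exact hu.congr' (heq.symm.eventuallyEq_of_mem self_mem_nhdsWithin)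
    · exact ((hsol.congr heq).hasDerivAt t ht).continuousAt.continuousWithinAt
  exact ⟨hcont, hzero, ⟨x, hx.le, by rwa [heq hx]⟩,
    ⟨u', (hsol.congr heq).hasDerivAt, (hsol.congr heq).hasDerivAt_deriv⟩,
    hL2.congr_fun (fun t ht => by rw [heq ht]) measurableSet_Ioi⟩

lemma isEigenvalue_iff_integrableOn {u u' : ℝ → ℂ} {d : ℂ} (hα : 0 ≤ α)
    (hsol : IsSchrodingerSolution (powerPotential α c lam) u u')
    (hu : Tendsto u (𝓝[>] 0) (𝓝 0)) (hu' : Tendsto u' (𝓝[>] 0) (𝓝 d)) (hd : d ≠ 0) :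
    IsEigenvalue α c lam ↔ IntegrableOn (fun x => ‖u x‖ ^ 2) (Ioi 0) := by
  constructor
  · rintro ⟨y, hy⟩
    obtain ⟨y', hysol⟩ := hy.exists_isSchrodingerSolution
    obtain ⟨b, hb⟩ :=
      hysol.exists_tendsto_deriv_zero (continuous_powerPotential hα).continuousOn hy.1
    have hyu : EqOn y (fun x => b / d * u x) (Ioi 0) :=
      hysol.eqOn_const_mul_of_tendsto hsol (continuous_powerPotential hα).continuousOn
        hy.tendsto_zero hu hd hb hu'
    obtain ⟨x, hx, hyx⟩ := hy.exists_pos_ne_zero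
    have hbd : ‖b / d‖ ^ 2 ≠ 0 := by
      rw [hyu hx] at hyx
      exact pow_ne_zero 2 (norm_ne_zero_iff.2 (left_ne_zero_of_mul hyx))
    have hL2 : IntegrableOn (fun x => (‖b / d‖ ^ 2)⁻¹ * ‖y x‖ ^ 2) (Ioi 0) :=
      hy.2.2.2.2.const_mul _
    refine hL2.congr_fun (fun t ht => ?_) measurableSet_Ioi
    simp only [hyu ht, norm_mul (b / d), mul_pow, inv_mul_cancel_left₀ hbd]
  · intro hL2
    obtain ⟨x, hx, hux⟩ := hsol.exists_ne_zero hu' hd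
    exact ⟨_, isEigenfunction_indicator hsol hu hx hux hL2⟩

end Eigenvalue

section Flux

variable {q y y' : ℝ → ℂ} {e : ℂ} {k x X : ℝ}

/-- The rotated flux `Re (e ȳ y')`; for `e = 1` it is half the derivative of `|y|²`. -/
def flux (e : ℂ) (y y' : ℝ → ℂ) (x : ℝ) : ℝ := (e * (conj (y x) * y' x)).re

/-- The derivative of the flux `Re (e ȳ y')` along a solution of `y'' = q y`. -/
noncomputable def fluxDeriv (e : ℂ) (q y y' : ℝ → ℂ) (x : ℝ) : ℝ :=
  e.re * ‖y' x‖ ^ 2 + (e * q x).re * ‖y x‖ ^ 2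

lemma abs_flux_le : |flux e y y' x| ≤ ‖e‖ * (‖y x‖ * ‖y' x‖) :=
  (Complex.abs_re_le_norm _).trans (by simp)

lemma tendsto_flux_zero (e : ℂ) {d : ℂ} (hy : Tendsto y (𝓝[>] 0) (𝓝 0))
    (hy' : Tendsto y' (𝓝[>] 0) (𝓝 d)) : Tendsto (flux e y y') (𝓝[>] 0) (𝓝 0) := by
  refine squeeze_zero_norm (fun x => abs_flux_le) ?_
  simpa using (hy.norm.mul hy'.norm).const_mul ‖e‖

lemma mul_add_sq_le_fluxDeriv {p : ℝ} (he : k ≤ e.re) (hq : k * p ^ 2 ≤ (e * q x).re) :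
    k * (‖y' x‖ ^ 2 + (p * ‖y x‖) ^ 2) ≤ fluxDeriv e q y y' x := by
  calc k * (‖y' x‖ ^ 2 + (p * ‖y x‖) ^ 2) = k * ‖y' x‖ ^ 2 + k * p ^ 2 * ‖y x‖ ^ 2 := by ring
    _ ≤ fluxDeriv e q y y' x := by unfold fluxDeriv; gcongr

namespace IsSchrodingerSolution

lemma hasDerivAt_flux (h : IsSchrodingerSolution q y y') (e : ℂ) (hx : 0 < x) :
    HasDerivAt (flux e y y') (fluxDeriv e q y y' x) x := by
  convert! ((h.hasDerivAt x hx).const_mul (conj e)).inner ℝ (h.hasDerivAt_deriv x hx) using 1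
  · funext t
    simp only [flux, Complex.inner, map_mul, Complex.conj_conj, mul_assoc, mul_comm (y' t)]
  · simp only [fluxDeriv, Complex.inner, map_mul, Complex.conj_conj, Complex.sq_norm,
      Complex.normSq_apply, Complex.mul_re, Complex.mul_im, Complex.conj_re, Complex.conj_im]
    ring

lemma flux_nonpos (h : IsSchrodingerSolution q y y') (he : 0 < e.re) (hX : 0 < X)
    (hq : ∀ x, X ≤ x → 0 ≤ (e * q x).re) (hL2 : IntegrableOn (fun x => ‖y x‖ ^ 2) (Ioi X)) :
    flux e y y' X ≤ 0 := by
  by_contra! hpos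
  have hnorm : 0 < ‖e‖ := he.trans_le (Complex.re_le_norm e)
  have hkinetic : ∀ x, X ≤ x → e.re * ‖y' x‖ ^ 2 ≤ fluxDeriv e q y y' x := fun x hx =>
    le_add_of_nonneg_right (mul_nonneg (hq x hx) (sq_nonneg _))
  refine not_integrableOn_Ioi_of_sq_le_deriv_mul (N := flux e y y') (κ := e.re / ‖e‖ ^ 2)
    (by positivity) (fun x hx => h.hasDerivAt_flux e (hX.trans_le hx))
    (fun x hx => (by positivity : (0 : ℝ) ≤ e.re * ‖y' x‖ ^ 2).trans (hkinetic x hx)) hpos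
    (fun x hx => ?_) hL2
  calc e.re / ‖e‖ ^ 2 * flux e y y' x ^ 2
      ≤ e.re / ‖e‖ ^ 2 * (‖e‖ * (‖y x‖ * ‖y' x‖)) ^ 2 := by
        rw [← sq_abs (flux e y y' x)]
        gcongr
        exact abs_flux_le
    _ = e.re * ‖y' x‖ ^ 2 * ‖y x‖ ^ 2 := by field_simp
    _ ≤ fluxDeriv e q y y' x * ‖y x‖ ^ 2 := by gcongr; exact hkinetic x hx

lemma monotoneOn_flux_mul_exp (h : IsSchrodingerSolution q y y') {p P : ℝ → ℝ} (hk : 0 ≤ k)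
    (hX : 0 < X) (he1 : ‖e‖ ≤ 1) (he : k ≤ e.re) (hP : ∀ x, X ≤ x → HasDerivAt P (p x) x)
    (hp : ∀ x, X ≤ x → 0 ≤ p x) (hq : ∀ x, X ≤ x → k * p x ^ 2 ≤ (e * q x).re) :
    MonotoneOn (fun x => flux e y y' x * Real.exp (2 * k * P x)) (Ici X) := by
  refine monotoneOn_Ici_of_hasDerivAt_nonneg (fun x hx =>
    (h.hasDerivAt_flux e (hX.trans_le hx)).mul ((hP x hx).const_mul (2 * k)).exp) fun x hx => ?_
  have hflux : -(‖y x‖ * ‖y' x‖) ≤ flux e y y' x :=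
    neg_le_of_abs_le (abs_flux_le.trans (mul_le_of_le_one_left (by positivity) he1))
  have hkp : 0 ≤ k * p x := mul_nonneg hk (hp x hx)
  have hsum : 0 ≤ fluxDeriv e q y y' x + 2 * (k * p x) * flux e y y' x := by
    have hlower := mul_add_sq_le_fluxDeriv (y := y) (y' := y') he (hq x hx)
    nlinarith [mul_le_mul_of_nonneg_left hflux hkp,
      mul_nonneg hk (sq_nonneg (‖y' x‖ - p x * ‖y x‖))]
  nlinarith [mul_nonneg hsum (Real.exp_pos (2 * k * P x)).le]

lemma monotoneOn_norm_sq_add_flux (h : IsSchrodingerSolution q y y') (hk : 0 < k) (hX : 0 < X)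
    (he : k ≤ e.re) (hq : ∀ x, X ≤ x → k ≤ (e * q x).re) :
    MonotoneOn ((fun x => ‖y x‖ ^ 2) + fun x => flux e y y' x / k) (Ici X) := by
  refine monotoneOn_Ici_of_hasDerivAt_nonneg (fun x hx =>
    (h.hasDerivAt x (hX.trans_le hx)).norm_sq.add
      ((h.hasDerivAt_flux e (hX.trans_le hx)).div_const k)) fun x hx => ?_
  have hinner : -(‖y x‖ * ‖y' x‖) ≤ inner ℝ (y x) (y' x) :=
    neg_le_of_abs_le (abs_real_inner_le_norm (y x) (y' x))
  have hlower : ‖y' x‖ ^ 2 + (1 * ‖y x‖) ^ 2 ≤ fluxDeriv e q y y' x / k := by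
    rw [le_div_iff₀' hk]
    exact mul_add_sq_le_fluxDeriv he (by simpa using hq x hx)
  nlinarith [sq_nonneg (‖y x‖ - ‖y' x‖)]

/-- The Agmon estimate in one dimension, with `P` in the role of the Agmon distance. -/
theorem isBigO_exp_neg_of_integrableOn (h : IsSchrodingerSolution q y y') {p P : ℝ → ℝ}
    (hk : 0 < k) (hX : 0 < X) (he1 : ‖e‖ ≤ 1) (he : k ≤ e.re)
    (hP : ∀ x, X ≤ x → HasDerivAt P (p x) x) (hp : ∀ x, X ≤ x → 1 ≤ p x)
    (hq : ∀ x, X ≤ x → k * p x ^ 2 ≤ (e * q x).re)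
    (hL2 : IntegrableOn (fun x => ‖y x‖ ^ 2) (Ioi X)) :
    (fun x => ‖y x‖ ^ 2) =O[atTop] fun x => Real.exp (-(2 * k * P x)) := by
  have hkq : ∀ x, X ≤ x → k ≤ (e * q x).re := fun x hx =>
    (le_mul_of_one_le_right hk.le (one_le_pow₀ (hp x hx))).trans (hq x hx)
  have hflux : ∀ x, X ≤ x → flux e y y' x ≤ 0 := fun x hx =>
    h.flux_nonpos (hk.trans_le he) (hX.trans_le hx)
      (fun t ht => hk.le.trans (hkq t (hx.trans ht))) (hL2.mono_set (Ioi_subset_Ioi hx))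
  have hmono := h.monotoneOn_flux_mul_exp hk.le hX he1 he hP
    (fun t ht => zero_le_one.trans (hp t ht)) hq
  refine IsBigO.of_bound (-(flux e y y' X * Real.exp (2 * k * P X) / k)) ?_
  filter_upwards [eventually_ge_atTop X] with x hx
  rw [Real.norm_of_nonneg (sq_nonneg _), Real.norm_of_nonneg (Real.exp_pos _).le]
  calc ‖y x‖ ^ 2 ≤ -(flux e y y' x / k) :=
        le_neg_of_monotoneOn_add hL2 (h.monotoneOn_norm_sq_add_flux hk hX he hkq)
          (fun t ht => div_nonpos_of_nonpos_of_nonneg (hflux t ht) hk.le) hx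
    _ = -(flux e y y' x * Real.exp (2 * k * P x) / k) * Real.exp (-(2 * k * P x)) := by
        rw [Real.exp_neg]; field_simp
    _ ≤ -(flux e y y' X * Real.exp (2 * k * P X) / k) * Real.exp (-(2 * k * P x)) := by
        have hle : flux e y y' X * Real.exp (2 * k * P X) ≤
            flux e y y' x * Real.exp (2 * k * P x) :=
          hmono self_mem_Ici hx hx
        gcongr

lemma eqOn_zero_of_re_mul_pos (h : IsSchrodingerSolution q y y') (he : 0 < e.re)
    (hq : ∀ x, 0 < x → 0 < (e * q x).re) {d : ℂ} (hy : Tendsto y (𝓝[>] 0) (𝓝 0))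
    (hy' : Tendsto y' (𝓝[>] 0) (𝓝 d)) (hL2 : IntegrableOn (fun x => ‖y x‖ ^ 2) (Ioi 0)) :
    EqOn y 0 (Ioi 0) := by
  have hderiv_nonneg : ∀ x, 0 < x → 0 ≤ fluxDeriv e q y y' x := fun x hx => by
    have := (hq x hx).le
    unfold fluxDeriv
    positivity
  have hnonpos : ∀ x, 0 < x → flux e y y' x ≤ 0 := fun x hx =>
    h.flux_nonpos he hx (fun t ht => (hq t (hx.trans_le ht)).le)
      (hL2.mono_set (Ioi_subset_Ioi hx.le))
  have hnonneg : ∀ x, 0 < x → 0 ≤ flux e y y' x := fun x hx => by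
    refine le_of_tendsto (tendsto_flux_zero e hy hy') ?_
    filter_upwards [Ioo_mem_nhdsGT hx] with a ha
    exact monotoneOn_Ici_of_hasDerivAt_nonneg
      (fun t ht => h.hasDerivAt_flux e (ha.1.trans_le ht))
      (fun t ht => hderiv_nonneg t (ha.1.trans_le ht)) self_mem_Ici ha.2.le ha.2.le
  intro x hx
  have hflux : EqOn (flux e y y') (fun _ => 0) (Ioi 0) := fun t ht =>
    le_antisymm (hnonpos t ht) (hnonneg t ht)
  have hderiv : fluxDeriv e q y y' x = 0 := (h.hasDerivAt_flux e hx).unique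
    ((hasDerivAt_const x (0 : ℝ)).congr_of_eventuallyEq
      (hflux.eventuallyEq_of_mem (Ioi_mem_nhds hx)))
  have hpotential : (e * q x).re * ‖y x‖ ^ 2 = 0 := by
    unfold fluxDeriv at hderiv
    have := hq x hx
    exact ((add_eq_zero_iff_of_nonneg (by positivity) (by positivity)).1 hderiv).2
  simpa using (mul_eq_zero.1 hpotential).resolve_left (hq x hx).ne'

end IsSchrodingerSolution

end Flux

section PowerPotential

variable {α k : ℝ} {c lam e : ℂ} {y y' : ℝ → ℂ}

lemma re_mul_powerPotential (x : ℝ) :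
    (e * powerPotential α c lam x).re = (e * c).re * x ^ α - (e * lam).re := by
  rw [powerPotential, mul_sub, Complex.sub_re, ← mul_assoc, Complex.re_mul_ofReal]

lemma eventually_le_re_mul_powerPotential (hα : 0 < α) (hk : k < (e * c).re) :
    ∀ᶠ x in atTop, k * x ^ α ≤ (e * powerPotential α c lam x).re := by
  have hlim := (tendsto_rpow_atTop hα).const_mul_atTop (sub_pos.2 hk)
  filter_upwards [hlim.eventually_ge_atTop (e * lam).re] with x hx
  rw [re_mul_powerPotential]
  linarith

lemma IsSchrodingerSolution.isBigO_exp_neg_rpow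
    (h : IsSchrodingerSolution (powerPotential α c lam) y y') (hα : 0 < α) (hk : 0 < k)
    (he1 : ‖e‖ ≤ 1) (he : k ≤ e.re) (hec : k < (e * c).re)
    (hL2 : IntegrableOn (fun x => ‖y x‖ ^ 2) (Ioi 0)) :
    (fun x => ‖y x‖ ^ 2) =O[atTop]
      fun x => Real.exp (-(2 * k * (x ^ (α / 2 + 1) / (α / 2 + 1)))) := by
  obtain ⟨X, hX⟩ := eventually_atTop.1 (eventually_le_re_mul_powerPotential (lam := lam) hα hec)
  have hpos : ∀ x, max 1 X ≤ x → 0 < x := fun x hx => one_pos.trans_le ((le_max_left _ _).trans hx)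
  refine h.isBigO_exp_neg_of_integrableOn (p := fun x => x ^ (α / 2)) (X := max 1 X) hk
    (hpos _ le_rfl) he1 he (fun x hx => ?_)
    (fun x hx => Real.one_le_rpow ((le_max_left _ _).trans hx) (by positivity)) (fun x hx => ?_)
    (hL2.mono_set (Ioi_subset_Ioi (hpos _ le_rfl).le))
  · have hρ : α / 2 + 1 ≠ 0 := by positivity
    simpa [mul_div_cancel_left₀ _ hρ] using
      (Real.hasDerivAt_rpow_const (p := α / 2 + 1) (Or.inl (hpos x hx).ne')).div_const (α / 2 + 1)
  · rw [← Real.rpow_mul_natCast (hpos x hx).le, Nat.cast_two, div_mul_cancel₀ _ two_ne_zero]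
    exact hX x ((le_max_right _ _).trans hx)

lemma exists_re_eq_one_re_mul_nonpos {τ : ℂ} (hτ : ¬ ∃ r : ℝ, 0 < r ∧ τ = r) :
    ∃ e : ℂ, e.re = 1 ∧ (e * τ).re ≤ 0 := by
  by_cases him : τ.im = 0
  · refine ⟨1, Complex.one_re, ?_⟩
    by_contra! hre
    rw [one_mul] at hre
    exact hτ ⟨τ.re, hre, Complex.ext rfl him⟩
  · exact ⟨⟨1, τ.re / τ.im⟩, rfl, by simp [Complex.mul_re, him]⟩

theorem IsEigenvalue.exists_pos_eq_ofReal (hα : 0 < α) {τ : ℂ} (h : IsEigenvalue α 1 τ) :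
    ∃ r : ℝ, 0 < r ∧ τ = r := by
  by_contra hτ
  obtain ⟨e, he, heτ⟩ := exists_re_eq_one_re_mul_nonpos hτ
  obtain ⟨y, hy⟩ := h
  obtain ⟨y', hsol⟩ := hy.exists_isSchrodingerSolution
  obtain ⟨d, hd⟩ :=
    hsol.exists_tendsto_deriv_zero (continuous_powerPotential hα.le).continuousOn hy.1
  obtain ⟨x, hx, hyx⟩ := hy.exists_pos_ne_zero
  refine hyx (hsol.eqOn_zero_of_re_mul_pos (he ▸ one_pos) (fun t ht => ?_) hy.tendsto_zero hd
    hy.2.2.2.2 hx)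
  rw [re_mul_powerPotential, mul_one, he, one_mul]
  linarith [Real.rpow_pos_of_pos ht α]

end PowerPotential

section ExponentialSeries

variable {ι : Type*} {a : ι → ℂ} {p : ι → ℝ}

/-- The generalized exponential series `∑ aₖ exp (pₖ ζ)`; in the variable `z = exp ζ` it is the
generalized power series `∑ aₖ z ^ pₖ`. -/
noncomputable def expSeries (a : ι → ℂ) (p : ι → ℝ) (ζ : ℂ) : ℂ :=
  ∑' k, a k * Complex.exp (p k * ζ)

/-- Absolute convergence of `∑ aₖ exp (pₖ ζ)` at every `ζ`, tested on the real axis. -/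
def IsEntireExpSeries (a : ι → ℂ) (p : ι → ℝ) : Prop :=
  ∀ r : ℝ, Summable fun k => ‖a k‖ * Real.exp (p k * r)

lemma norm_mul_cexp (z : ℂ) (r : ℝ) (ζ : ℂ) :
    ‖z * Complex.exp (r * ζ)‖ = ‖z‖ * Real.exp (r * ζ.re) := by
  rw [norm_mul, Complex.norm_exp, Complex.re_ofReal_mul]

namespace IsEntireExpSeries

lemma hasSum (h : IsEntireExpSeries a p) (ζ : ℂ) :
    HasSum (fun k => a k * Complex.exp (p k * ζ)) (expSeries a p ζ) :=
  Summable.hasSum (.of_norm (by simpa only [norm_mul_cexp] using h ζ.re))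

lemma exponent_mul (h : IsEntireExpSeries a p) (hp : ∀ k, 0 ≤ p k) :
    IsEntireExpSeries (fun k => p k * a k) p := fun r => by
  refine (h (1 + r)).of_nonneg_of_le (fun k => by positivity) fun k => ?_
  calc ‖p k * a k‖ * Real.exp (p k * r) = p k * (‖a k‖ * Real.exp (p k * r)) := by
        rw [norm_mul, Complex.norm_real, Real.norm_of_nonneg (hp k), mul_assoc]
    _ ≤ Real.exp (p k) * (‖a k‖ * Real.exp (p k * r)) := by
        gcongr
        linarith [Real.add_one_le_exp (p k)]
    _ = ‖a k‖ * Real.exp (p k * (1 + r)) := by rw [mul_one_add, Real.exp_add]; ring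

lemma hasDerivAt_expSeries (h : IsEntireExpSeries a p) (hp : ∀ k, 0 ≤ p k) (ζ : ℂ) :
    HasDerivAt (expSeries a p) (expSeries (fun k => p k * a k) p ζ) ζ := by
  have hζ : ζ ∈ {z : ℂ | z.re < ζ.re + 1} := lt_add_one ζ.re
  have hterm : ∀ k z, HasDerivAt (fun z => a k * Complex.exp (p k * z))
      (p k * a k * Complex.exp (p k * z)) z := fun k z => by
    convert! ((hasDerivAt_const_mul (p k : ℂ)).cexp).const_mul (a k) using 1
    ring
  unfold expSeries
  refine hasDerivAt_tsum_of_isPreconnected (h.exponent_mul hp (ζ.re + 1))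
    (isOpen_lt Complex.continuous_re continuous_const)
    (convex_halfSpace_re_lt (ζ.re + 1)).isPreconnected (fun k z _ => hterm k z)
    (fun k z hz => ?_) hζ (h.hasSum ζ).summable hζ
  rw [norm_mul_cexp]
  have := hp k
  have hz : z.re < ζ.re + 1 := hz
  gcongr

lemma hasSum_extend (h : IsEntireExpSeries a p) {σ : ι → ι} (hσ : Function.Injective σ) {δ : ℝ}
    (hδ : ∀ k, p (σ k) = p k + δ) (ζ : ℂ) :
    HasSum (fun k => Function.extend σ a 0 k * Complex.exp (p k * ζ))
      (Complex.exp (δ * ζ) * expSeries a p ζ) := by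
  rw [← hσ.hasSum_iff fun k hk => by simp [Function.extend_apply' _ _ _ hk]]
  convert! (h.hasSum ζ).mul_left (Complex.exp (δ * ζ)) using 2 with k
  rw [Function.comp_apply, hσ.extend_apply, hδ, Complex.ofReal_add, add_mul, Complex.exp_add]
  ring

lemma tendsto_expSeries_mul_exp_neg (h : IsEntireExpSeries a p) {i : ι}
    (hi : ∀ k ≠ i, p i < p k) (s : ℂ) :
    Tendsto (fun x : ℝ => expSeries a p (x + s) * Complex.exp (-(p i * (x + s)))) atBot
      (𝓝 (a i)) := by
  classical
  have hfactor : ∀ (k : ι) (z : ℂ),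
      a k * Complex.exp (p k * z) * Complex.exp (-(p i * z)) =
        a k * Complex.exp ((p k - p i : ℝ) * z) := fun k z => by
    rw [mul_assoc, ← Complex.exp_add]
    push_cast
    ring_nf
  have hle : ∀ k, p i ≤ p k := fun k => by
    rcases eq_or_ne k i with rfl | hk
    exacts [le_rfl, (hi k hk).le]
  simp only [expSeries, ← tsum_mul_right, hfactor]
  rw [← tsum_ite_eq i a]
  refine tendsto_tsum_of_dominated_convergence
    (bound := fun k => ‖a k‖ * Real.exp ((p k - p i) * s.re)) ?_ (fun k => ?_) ?_
  · refine ((h s.re).mul_right (Real.exp (-(p i * s.re)))).congr fun k => ?_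
    rw [mul_assoc, ← Real.exp_add]
    ring_nf
  · split_ifs with hk
    · subst hk
      simp
    · have hre : Tendsto (fun x : ℝ => (p k - p i) * (x + s.re)) atBot atBot :=
        (tendsto_atBot_add_const_right _ _ tendsto_id).const_mul_atBot (sub_pos.2 (hi k hk))
      rw [tendsto_zero_iff_norm_tendsto_zero]
      simpa only [norm_mul_cexp, Complex.add_re, Complex.ofReal_re, mul_zero] using!
        (Real.tendsto_exp_atBot.comp hre).const_mul ‖a k‖
  · filter_upwards [eventually_le_atBot 0] with x hx k
    rw [norm_mul_cexp, Complex.add_re, Complex.ofReal_re]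
    gcongr
    · exact sub_nonneg.2 (hle k)
    · linarith

end IsEntireExpSeries

end ExponentialSeries

section SquaredExponentialSeries

open scoped Nat

lemma summable_sq_pow_div_factorial {t : ℝ} (ht : 0 ≤ t) :
    Summable fun n : ℕ => (t ^ n / n !) ^ 2 :=
  ((Real.summable_pow_div_factorial t).mul_left (Real.exp t)).of_nonneg_of_le
    (fun _ => sq_nonneg _) fun n => by
      rw [sq]
      gcongr
      exact Real.pow_div_factorial_le_exp t ht n

lemma tsum_sq_pow_div_factorial_le {t : ℝ} (ht : 0 ≤ t) :
    ∑' n : ℕ, (t ^ n / n !) ^ 2 ≤ Real.exp (2 * t) := by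
  have hexp : HasSum (fun n : ℕ => t ^ n / n !) (Real.exp t) := by
    rw [Real.exp_eq_exp_ℝ]
    exact NormedSpace.expSeries_div_hasSum_exp t
  rw [two_mul, Real.exp_add]
  refine hasSum_le (fun n => ?_) (summable_sq_pow_div_factorial ht).hasSum (hexp.mul_left _)
  rw [sq]
  gcongr
  exact Real.pow_div_factorial_le_exp t ht n

lemma summable_sq_mul_sq_pow_div_factorial {s t : ℝ} (hs : 0 ≤ s) (ht : 0 ≤ t) :
    Summable fun k : ℕ × ℕ => (s ^ k.1 / k.1 !) ^ 2 * (t ^ k.2 / k.2 !) ^ 2 :=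
  (summable_sq_pow_div_factorial hs).mul_of_nonneg (summable_sq_pow_div_factorial ht)
    (fun _ => sq_nonneg _) fun _ => sq_nonneg _

lemma tsum_sq_mul_sq_pow_div_factorial_le {s t : ℝ} (hs : 0 ≤ s) (ht : 0 ≤ t) :
    ∑' k : ℕ × ℕ, (s ^ k.1 / k.1 !) ^ 2 * (t ^ k.2 / k.2 !) ^ 2 ≤ Real.exp (2 * s + 2 * t) := by
  rw [← (summable_sq_pow_div_factorial hs).tsum_mul_tsum (summable_sq_pow_div_factorial ht)
    (summable_sq_mul_sq_pow_div_factorial hs ht), Real.exp_add]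
  exact mul_le_mul (tsum_sq_pow_div_factorial_le hs) (tsum_sq_pow_div_factorial_le ht)
    (tsum_nonneg fun _ => sq_nonneg _) (Real.exp_pos _).le

end SquaredExponentialSeries

section LogSolution

open scoped Nat

variable {α : ℝ}

/-- The exponents `1 + (α + 2) n + 2 m` of the Frobenius solution of `w'' = (z ^ α - μ) w` with
`w(z) ~ z` at the origin. -/
def frobeniusExponent (α : ℝ) (k : ℕ × ℕ) : ℝ := 1 + (α + 2) * k.1 + 2 * k.2

/-- The coefficients of the Frobenius solution of `w'' = (z ^ α - μ) w` with `w(z) ~ z` at the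
origin, obtained by comparing the coefficients of `z ^ (p - 2)`, where `p` is the exponent. -/
noncomputable def frobeniusCoeff (α : ℝ) (μ : ℂ) : ℕ × ℕ → ℂ
  | (0, 0) => 1
  | (n + 1, 0) => frobeniusCoeff α μ (n, 0) /
      (frobeniusExponent α (n + 1, 0) * (frobeniusExponent α (n + 1, 0) - 1))
  | (0, m + 1) => -μ * frobeniusCoeff α μ (0, m) /
      (frobeniusExponent α (0, m + 1) * (frobeniusExponent α (0, m + 1) - 1))
  | (n + 1, m + 1) => (frobeniusCoeff α μ (n, m + 1) + -μ * frobeniusCoeff α μ (n + 1, m)) /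
      (frobeniusExponent α (n + 1, m + 1) * (frobeniusExponent α (n + 1, m + 1) - 1))

lemma one_le_frobeniusExponent (hα : 0 ≤ α) (k : ℕ × ℕ) : 1 ≤ frobeniusExponent α k := by
  unfold frobeniusExponent
  have : 0 ≤ (α + 2) * k.1 + 2 * k.2 := by positivity
  linarith

lemma one_lt_frobeniusExponent (hα : 0 ≤ α) {k : ℕ × ℕ} (hk : k ≠ 0) :
    1 < frobeniusExponent α k := by
  unfold frobeniusExponent
  have : 0 < (α + 2) * k.1 + 2 * k.2 := by
    rcases Nat.eq_zero_or_pos k.1 with h1 | h1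
    · have : 0 < k.2 := Nat.pos_of_ne_zero fun h2 => hk (Prod.ext h1 h2)
      positivity
    · positivity
  linarith

lemma sq_add_sq_le_frobeniusExponent (hα : 0 ≤ α) (n m : ℕ) :
    (n : ℝ) ^ 2 + (m : ℝ) ^ 2 ≤
      frobeniusExponent α (n, m) * (frobeniusExponent α (n, m) - 1) := by
  have hn : (n : ℝ) ≤ (α + 2) * n := le_mul_of_one_le_left n.cast_nonneg (by linarith)
  unfold frobeniusExponent
  nlinarith [(n.cast_nonneg : (0 : ℝ) ≤ n), (m.cast_nonneg : (0 : ℝ) ≤ m)]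

lemma frobeniusExponent_mul_sub_one_pos (hα : 0 ≤ α) {k : ℕ × ℕ} (hk : k ≠ 0) :
    0 < frobeniusExponent α k * (frobeniusExponent α k - 1) :=
  mul_pos (zero_lt_one.trans_le (one_le_frobeniusExponent hα k))
    (sub_pos.2 (one_lt_frobeniusExponent hα hk))

lemma frobeniusExponent_mul_frobeniusCoeff (hα : 0 ≤ α) (μ : ℂ) (k : ℕ × ℕ) :
    frobeniusExponent α k * (frobeniusExponent α k - 1) * frobeniusCoeff α μ k =
      Function.extend (Prod.map Nat.succ id) (frobeniusCoeff α μ) 0 k +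
        -μ * Function.extend (Prod.map id Nat.succ) (frobeniusCoeff α μ) 0 k := by
  have hfst (n m : ℕ) : Function.extend (Prod.map Nat.succ id) (frobeniusCoeff α μ) 0 (n + 1, m) =
      frobeniusCoeff α μ (n, m) :=
    (Nat.succ_injective.prodMap Function.injective_id).extend_apply _ _ (n, m)
  have hfst_zero (m : ℕ) :
      Function.extend (Prod.map Nat.succ id) (frobeniusCoeff α μ) 0 (0, m) = 0 :=
    Function.extend_apply' _ _ _ (by simp)
  have hsnd (n m : ℕ) : Function.extend (Prod.map id Nat.succ) (frobeniusCoeff α μ) 0 (n, m + 1) =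
      frobeniusCoeff α μ (n, m) :=
    (Function.injective_id.prodMap Nat.succ_injective).extend_apply _ _ (n, m)
  have hsnd_zero (n : ℕ) :
      Function.extend (Prod.map id Nat.succ) (frobeniusCoeff α μ) 0 (n, 0) = 0 :=
    Function.extend_apply' _ _ _ (by simp)
  have hne {k : ℕ × ℕ} (hk : k ≠ 0) :
      (frobeniusExponent α k * (frobeniusExponent α k - 1) : ℂ) ≠ 0 := by
    exact_mod_cast (frobeniusExponent_mul_sub_one_pos hα hk).ne'
  match k with
  | (0, 0) =>
    rw [hfst_zero, hsnd_zero]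
    simp [frobeniusExponent]
  | (n + 1, 0) =>
    rw [hfst, hsnd_zero, mul_zero, add_zero, frobeniusCoeff, mul_div_cancel₀ _ (hne (by simp))]
  | (0, m + 1) =>
    rw [hfst_zero, hsnd, zero_add, frobeniusCoeff, mul_div_cancel₀ _ (hne (by simp))]
  | (n + 1, m + 1) => rw [hfst, hsnd, frobeniusCoeff, mul_div_cancel₀ _ (hne (by simp))]

lemma norm_div_frobeniusExponent_le (hα : 0 ≤ α) {n m : ℕ} (hk : (n, m) ≠ 0) {z : ℂ} {B : ℝ}
    (hB : 0 ≤ B) (hz : ‖z‖ ≤ ((n : ℝ) ^ 2 + (m : ℝ) ^ 2) * B) :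
    ‖z / (frobeniusExponent α (n, m) * (frobeniusExponent α (n, m) - 1))‖ ≤ B := by
  have hpos := frobeniusExponent_mul_sub_one_pos hα hk
  have hnorm : ‖(frobeniusExponent α (n, m) * (frobeniusExponent α (n, m) - 1) : ℂ)‖ =
      frobeniusExponent α (n, m) * (frobeniusExponent α (n, m) - 1) := by
    exact_mod_cast Complex.norm_of_nonneg hpos.le
  rw [norm_div, hnorm, div_le_iff₀' hpos]
  exact hz.trans (by gcongr; exact sq_add_sq_le_frobeniusExponent hα n m)

lemma norm_frobeniusCoeff_le (hα : 0 ≤ α) (μ : ℂ) : ∀ n m : ℕ,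
    ‖frobeniusCoeff α μ (n, m)‖ ≤ ‖μ‖ ^ m / (n ! ^ 2 * m ! ^ 2)
  | 0, 0 => by simp [frobeniusCoeff]
  | n + 1, 0 => by
    rw [frobeniusCoeff]
    refine norm_div_frobeniusExponent_le hα (by simp) (by positivity) ?_
    refine (norm_frobeniusCoeff_le hα μ n 0).trans_eq ?_
    rw [Nat.factorial_succ]
    push_cast
    field_simp
    simp
  | 0, m + 1 => by
    rw [frobeniusCoeff]
    refine norm_div_frobeniusExponent_le hα (by simp) (by positivity) ?_
    rw [norm_mul, norm_neg]
    refine (mul_le_mul_of_nonneg_left (norm_frobeniusCoeff_le hα μ 0 m)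
      (norm_nonneg μ)).trans_eq ?_
    rw [Nat.factorial_succ]
    push_cast
    field_simp
    ring
  | n + 1, m + 1 => by
    rw [frobeniusCoeff]
    refine norm_div_frobeniusExponent_le hα (by simp) (by positivity) ?_
    refine (norm_add_le _ _).trans ?_
    rw [norm_mul, norm_neg]
    refine (add_le_add (norm_frobeniusCoeff_le hα μ n (m + 1)) (mul_le_mul_of_nonneg_left
      (norm_frobeniusCoeff_le hα μ (n + 1) m) (norm_nonneg μ))).trans_eq ?_
    rw [Nat.factorial_succ, Nat.factorial_succ]
    push_cast
    field_simp
    ring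

lemma norm_frobeniusCoeff_mul_exp_le (hα : 0 ≤ α) (μ : ℂ) (k : ℕ × ℕ) (r : ℝ) :
    ‖frobeniusCoeff α μ k‖ * Real.exp (frobeniusExponent α k * r) ≤
      Real.exp r * ((Real.exp ((α / 2 + 1) * r) ^ k.1 / k.1 !) ^ 2 *
        ((√‖μ‖ * Real.exp r) ^ k.2 / k.2 !) ^ 2) := by
  have hexp : Real.exp (frobeniusExponent α k * r) =
      Real.exp r * ((Real.exp ((α / 2 + 1) * r) ^ k.1) ^ 2 * (Real.exp r ^ k.2) ^ 2) := by
    simp only [frobeniusExponent, ← Real.exp_nat_mul, ← Real.exp_add]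
    congr 1
    push_cast
    ring
  have hμ : ‖μ‖ ^ k.2 = (√‖μ‖ ^ k.2) ^ 2 := by
    rw [pow_right_comm, Real.sq_sqrt (norm_nonneg μ)]
  calc ‖frobeniusCoeff α μ k‖ * Real.exp (frobeniusExponent α k * r)
      ≤ ‖μ‖ ^ k.2 / (k.1 ! ^ 2 * k.2 ! ^ 2) * Real.exp (frobeniusExponent α k * r) := by
        gcongr
        exact norm_frobeniusCoeff_le hα μ k.1 k.2
    _ = _ := by
        rw [hexp, hμ, mul_pow]
        field_simp

lemma isEntireExpSeries_frobenius (hα : 0 ≤ α) (μ : ℂ) :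
    IsEntireExpSeries (frobeniusCoeff α μ) (frobeniusExponent α) := fun r =>
  ((summable_sq_mul_sq_pow_div_factorial (Real.exp_pos _).le (by positivity)).mul_left
    (Real.exp r)).of_nonneg_of_le (fun k => by positivity)
    fun k => norm_frobeniusCoeff_mul_exp_le hα μ k r

/-- The function `w (exp ζ)`, where `w` is the solution of `w'' = (z ^ α - μ) w` on the Riemann
surface of the logarithm with `w(z) ~ z` at the origin. It is entire, and it restricts to the ray
`arg z = θ` along the horizontal line `Im ζ = θ`. -/
noncomputable def logSolution (α : ℝ) (μ : ℂ) : ℂ → ℂ :=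
  expSeries (frobeniusCoeff α μ) (frobeniusExponent α)

/-- The derivative of `logSolution`. -/
noncomputable def logSolutionDeriv (α : ℝ) (μ : ℂ) : ℂ → ℂ :=
  expSeries (fun k => frobeniusExponent α k * frobeniusCoeff α μ k) (frobeniusExponent α)

lemma frobeniusExponent_nonneg (hα : 0 ≤ α) (k : ℕ × ℕ) : 0 ≤ frobeniusExponent α k :=
  zero_le_one.trans (one_le_frobeniusExponent hα k)

lemma hasDerivAt_logSolution (hα : 0 ≤ α) (μ ζ : ℂ) :
    HasDerivAt (logSolution α μ) (logSolutionDeriv α μ ζ) ζ :=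
  (isEntireExpSeries_frobenius hα μ).hasDerivAt_expSeries (frobeniusExponent_nonneg hα) ζ

/-- The first-order term comes from the change of variable `z = exp ζ` in `w'' = (z ^ α - μ) w`. -/
lemma hasDerivAt_logSolutionDeriv (hα : 0 ≤ α) (μ ζ : ℂ) :
    HasDerivAt (logSolutionDeriv α μ) (logSolutionDeriv α μ ζ +
      (Complex.exp ((α + 2) * ζ) - μ * Complex.exp (2 * ζ)) * logSolution α μ ζ) ζ := by
  have hentire := isEntireExpSeries_frobenius hα μ
  have hp := frobeniusExponent_nonneg hα
  have hderiv := (hentire.exponent_mul hp).hasDerivAt_expSeries hp ζ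
  have hshift₁ := hentire.hasSum_extend (δ := α + 2)
    (Nat.succ_injective.prodMap Function.injective_id)
    (fun k => by simp [frobeniusExponent]; ring) ζ
  have hshift₂ := hentire.hasSum_extend (δ := 2)
    (Function.injective_id.prodMap Nat.succ_injective)
    (fun k => by simp [frobeniusExponent]; ring) ζ
  convert! hderiv using 1
  have hsum := ((hentire.exponent_mul hp).hasSum ζ).add (hshift₁.add (hshift₂.mul_left (-μ)))
  have heq := hsum.unique (a₂ := expSeries _ _ ζ) <| by
    convert! ((hentire.exponent_mul hp).exponent_mul hp).hasSum ζ using 2 with k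
    linear_combination -Complex.exp (frobeniusExponent α k * ζ) *
      frobeniusExponent_mul_frobeniusCoeff hα μ k
  rw [← heq]
  push_cast
  unfold logSolution logSolutionDeriv
  ring

lemma norm_logSolution_le (hα : 0 ≤ α) (μ ζ : ℂ) :
    ‖logSolution α μ ζ‖ ≤ Real.exp (1 + 2 * √‖μ‖) *
      Real.exp ((3 + 2 * √‖μ‖) * Real.exp ((α / 2 + 1) * ζ.re)) := by
  set ρ := α / 2 + 1
  set E := Real.exp (ρ * ζ.re)
  have hμ : 0 ≤ √‖μ‖ * Real.exp ζ.re := by positivity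
  have hexp_le : Real.exp ζ.re ≤ 1 + E := by
    rcases le_total ζ.re 0 with h | h
    · exact (Real.exp_le_one_iff.2 h).trans (le_add_of_nonneg_right (Real.exp_pos _).le)
    · have : ζ.re ≤ ρ * ζ.re := le_mul_of_one_le_left h (by grind)
      exact (Real.exp_le_exp.2 this).trans (le_add_of_nonneg_left zero_le_one)
  calc ‖logSolution α μ ζ‖
      ≤ ∑' k : ℕ × ℕ, Real.exp ζ.re *
          ((E ^ k.1 / k.1 !) ^ 2 * ((√‖μ‖ * Real.exp ζ.re) ^ k.2 / k.2 !) ^ 2) :=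
        ((isEntireExpSeries_frobenius hα μ).hasSum ζ).norm_le_of_bounded
          ((summable_sq_mul_sq_pow_div_factorial (Real.exp_pos _).le hμ).mul_left _).hasSum
          fun k => (norm_mul_cexp _ _ _).trans_le (norm_frobeniusCoeff_mul_exp_le hα μ k ζ.re)
    _ ≤ Real.exp (Real.exp ζ.re) * Real.exp (2 * E + 2 * (√‖μ‖ * Real.exp ζ.re)) := by
        rw [tsum_mul_left]
        exact mul_le_mul ((lt_add_one _).le.trans (Real.add_one_le_exp _))
          (tsum_sq_mul_sq_pow_div_factorial_le (Real.exp_pos _).le hμ)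
          (tsum_nonneg fun _ => by positivity) (Real.exp_pos _).le
    _ ≤ Real.exp (1 + 2 * √‖μ‖) * Real.exp ((3 + 2 * √‖μ‖) * E) := by
        rw [← Real.exp_add, ← Real.exp_add, Real.exp_le_exp]
        linarith [mul_le_mul_of_nonneg_left hexp_le (Real.sqrt_nonneg ‖μ‖)]

lemma frobeniusExponent_zero (α : ℝ) : frobeniusExponent α 0 = 1 := by simp [frobeniusExponent]

lemma frobeniusCoeff_zero (α : ℝ) (μ : ℂ) : frobeniusCoeff α μ 0 = 1 := by
  rw [Prod.zero_eq_mk]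
  exact frobeniusCoeff.eq_1 ..

lemma tendsto_logSolution_mul_exp_neg (hα : 0 ≤ α) (μ s : ℂ) :
    Tendsto (fun x : ℝ => logSolution α μ (x + s) * Complex.exp (-(x + s))) atBot (𝓝 1) := by
  simpa [logSolution, frobeniusExponent_zero, frobeniusCoeff_zero] using
    (isEntireExpSeries_frobenius hα μ).tendsto_expSeries_mul_exp_neg (i := 0)
      (fun k hk => (frobeniusExponent_zero α).trans_lt (one_lt_frobeniusExponent hα hk)) s

lemma tendsto_logSolutionDeriv_mul_exp_neg (hα : 0 ≤ α) (μ s : ℂ) :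
    Tendsto (fun x : ℝ => logSolutionDeriv α μ (x + s) * Complex.exp (-(x + s))) atBot (𝓝 1) := by
  simpa [logSolutionDeriv, frobeniusExponent_zero, frobeniusCoeff_zero] using
    ((isEntireExpSeries_frobenius hα μ).exponent_mul
      (frobeniusExponent_nonneg hα)).tendsto_expSeries_mul_exp_neg (i := 0)
      (fun k hk => (frobeniusExponent_zero α).trans_lt (one_lt_frobeniusExponent hα hk)) s

end LogSolution

section PhragmenLindelof

variable {f : ℂ → ℂ} {ρ K ε C : ℝ}

lemma norm_mul_cexp_cexp (w ζ : ℂ) (ε K ρ : ℝ) :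
    ‖w * Complex.exp ((ε + K * Complex.I) * Complex.exp (ρ * ζ))‖ = ‖w‖ * Real.exp
      ((ε * Real.cos (ρ * ζ.im) - K * Real.sin (ρ * ζ.im)) * Real.exp (ρ * ζ.re)) := by
  rw [norm_mul, Complex.norm_exp, Complex.mul_re, Complex.exp_re, Complex.exp_im,
    Complex.re_ofReal_mul, Complex.im_ofReal_mul]
  congr 2
  simp only [Complex.add_re, Complex.add_im, Complex.ofReal_re, Complex.ofReal_im,
    Complex.re_ofReal_mul, Complex.im_ofReal_mul, Complex.I_re, Complex.I_im]
  ring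

lemma mul_cos_sub_mul_sin_le (ε K x : ℝ) : ε * Real.cos x - K * Real.sin x ≤ |ε| + |K| := by
  have hcos : ε * Real.cos x ≤ |ε| := by
    grw [le_abs_self (ε * Real.cos x), abs_mul, Real.abs_cos_le_one, mul_one]
  have hsin : -(K * Real.sin x) ≤ |K| := by
    grw [neg_le_abs (K * Real.sin x), abs_mul, Real.abs_sin_le_one, mul_one]
  linarith

lemma norm_le_of_exp_decay_of_exp_growth_of_im_nonneg (hf : Differentiable ℂ f) (hρ : 0 < ρ)
    (hgrowth : ∀ ζ : ℂ, ‖f ζ‖ ≤ C * Real.exp (K * Real.exp (ρ * ζ.re)))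
    (hdecay : ∀ t : ℝ, ‖f t‖ ≤ C * Real.exp (-(ε * Real.exp (ρ * t)))) {ζ : ℂ}
    (h0 : 0 ≤ ζ.im) (h1 : ζ.im ≤ Real.pi / (2 * ρ)) :
    ‖f ζ‖ ≤ C * Real.exp
      (-((ε * Real.cos (ρ * ζ.im) - K * Real.sin (ρ * ζ.im)) * Real.exp (ρ * ζ.re))) := by
  have hC : 0 ≤ C := nonneg_of_mul_nonneg_left ((norm_nonneg _).trans (hgrowth 0)) (Real.exp_pos _)
  -- The multiplier turns the bounds on both edges of the strip into the constant bound `C`.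
  set g : ℂ → ℂ := fun ζ => f ζ * Complex.exp ((ε + K * Complex.I) * Complex.exp (ρ * ζ)) with hg
  have hg_diff : Differentiable ℂ g := by fun_prop
  have hg_growth : ∀ z, ‖g z‖ ≤ C * Real.exp ((|K| + (|ε| + |K|)) * Real.exp (ρ * |z.re|)) := by
    intro z
    rw [hg, norm_mul_cexp_cexp]
    refine (mul_le_mul_of_nonneg_right (hgrowth z) (Real.exp_pos _).le).trans ?_
    rw [mul_assoc, ← Real.exp_add, ← add_mul]
    gcongr
    exacts [le_abs_self K, mul_cos_sub_mul_sin_le _ _ _, le_abs_self _]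
  have hg_le : ‖g ζ‖ ≤ C := by
    refine PhragmenLindelof.horizontal_strip hg_diff.diffContOnCl
      ⟨ρ, ?_, |K| + (|ε| + |K|), ?_⟩ (fun z hz => ?_) (fun z hz => ?_) h0 h1
    · rw [sub_zero, div_div_eq_mul_div, mul_div_cancel_left₀ _ Real.pi_pos.ne']
      linarith
    · refine .of_bound C (.of_forall fun z => ?_)
      rw [Real.norm_of_nonneg (Real.exp_pos _).le]
      exact hg_growth z
    · have hz_eq : z = (z.re : ℂ) := Complex.ext (by simp) (by simp [hz])
      have hz_decay := hdecay z.re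
      rw [← hz_eq, Real.exp_neg, ← div_eq_mul_inv, le_div_iff₀ (Real.exp_pos _)] at hz_decay
      rw [hg, norm_mul_cexp_cexp, hz]
      simpa using hz_decay
    · have hρπ : ρ * (Real.pi / (2 * ρ)) = Real.pi / 2 := by field_simp
      rw [hg, norm_mul_cexp_cexp, hz, hρπ, Real.cos_pi_div_two, Real.sin_pi_div_two, mul_zero,
        mul_one, zero_sub, neg_mul, Real.exp_neg, ← div_eq_mul_inv, div_le_iff₀ (Real.exp_pos _)]
      exact hgrowth z
  rwa [hg, norm_mul_cexp_cexp, ← le_div_iff₀ (Real.exp_pos _), div_eq_mul_inv,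
    ← Real.exp_neg] at hg_le

lemma norm_le_of_exp_decay_of_exp_growth (hf : Differentiable ℂ f) (hρ : 0 < ρ)
    (hgrowth : ∀ ζ : ℂ, ‖f ζ‖ ≤ C * Real.exp (K * Real.exp (ρ * ζ.re)))
    (hdecay : ∀ t : ℝ, ‖f t‖ ≤ C * Real.exp (-(ε * Real.exp (ρ * t)))) {ζ : ℂ}
    (hζ : |ζ.im| ≤ Real.pi / (2 * ρ)) :
    ‖f ζ‖ ≤ C * Real.exp
      (-((ε * Real.cos (ρ * |ζ.im|) - K * Real.sin (ρ * |ζ.im|)) * Real.exp (ρ * ζ.re))) := by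
  rcases le_total 0 ζ.im with h0 | h0
  · rw [abs_of_nonneg h0] at hζ ⊢
    exact norm_le_of_exp_decay_of_exp_growth_of_im_nonneg hf hρ hgrowth hdecay h0 hζ
  · rw [abs_of_nonpos h0] at hζ ⊢
    have hf_conj : Differentiable ℂ (conj ∘ f ∘ conj) := fun z => by
      simpa only [Complex.conj_conj] using (hf (conj z)).conj_conj
    simpa using norm_le_of_exp_decay_of_exp_growth_of_im_nonneg hf_conj hρ
      (fun z => by simpa using hgrowth (conj z)) (fun t => by simpa using hdecay t)
      (ζ := conj ζ) (by simpa using h0) (by simpa using hζ)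

lemma isBigO_top_of_isBigO_atTop {f g : ℝ → ℝ} (hfg : f =O[atTop] g) (hg : Antitone g)
    (hg_pos : ∀ t, 0 < g t) (hf : ∀ T, ∃ B, ∀ t ≤ T, ‖f t‖ ≤ B) : f =O[⊤] g := by
  obtain ⟨A, hA⟩ := hfg.bound
  obtain ⟨T, hT⟩ := eventually_atTop.1 hA
  obtain ⟨B, hB⟩ := hf T
  refine isBigO_top.2 ⟨max A (B / g T), fun t => ?_⟩
  rcases le_total T t with ht | ht
  · exact (hT t ht).trans (by gcongr; exact le_max_left _ _)
  · have hB0 : 0 ≤ B := (norm_nonneg _).trans (hB t ht)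
    calc ‖f t‖ ≤ B / g T * g T := (hB t ht).trans_eq (div_mul_cancel₀ _ (hg_pos T).ne').symm
      _ ≤ max A (B / g T) * ‖g t‖ := by
        rw [Real.norm_of_nonneg (hg_pos t).le]
        have := (hg_pos T).le
        gcongr
        exacts [le_max_right _ _, hg ht]

lemma isBigO_exp_neg_of_isBigO_exp_neg (hf : Differentiable ℂ f) (hρ : 0 < ρ) (hK : 0 ≤ K)
    (hε : 0 ≤ ε) (hgrowth : ∀ ζ : ℂ, ‖f ζ‖ ≤ C * Real.exp (K * Real.exp (ρ * ζ.re)))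
    (hdecay : (fun t : ℝ => ‖f t‖) =O[atTop] fun t => Real.exp (-(ε * Real.exp (ρ * t)))) {θ : ℝ}
    (hθ : |θ| ≤ Real.pi / (2 * ρ)) :
    (fun t : ℝ => ‖f (t + θ * Complex.I)‖) =O[⊤] fun t => Real.exp
      (-((ε * Real.cos (ρ * |θ|) - K * Real.sin (ρ * |θ|)) * Real.exp (ρ * t))) := by
  have hC : 0 ≤ C := nonneg_of_mul_nonneg_left ((norm_nonneg _).trans (hgrowth 0)) (Real.exp_pos _)
  have hanti : Antitone fun t => Real.exp (-(ε * Real.exp (ρ * t))) := fun s t hst => by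
    dsimp only
    gcongr
  have hbound (T : ℝ) : ∃ B, ∀ t ≤ T, ‖‖f t‖‖ ≤ B :=
    ⟨C * Real.exp (K * Real.exp (ρ * T)), fun t ht => by
      rw [norm_norm]
      refine (hgrowth t).trans ?_
      rw [Complex.ofReal_re]
      gcongr⟩
  obtain ⟨D, hD⟩ := isBigO_top.1
    (isBigO_top_of_isBigO_atTop hdecay hanti (fun _ => Real.exp_pos _) hbound)
  simp only [norm_norm, Real.norm_of_nonneg (Real.exp_pos _).le] at hD
  refine isBigO_top.2 ⟨max C D, fun t => ?_⟩
  simpa using norm_le_of_exp_decay_of_exp_growth (C := max C D) (ζ := t + θ * Complex.I) hf hρ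
    (fun ζ => (hgrowth ζ).trans (by gcongr; exact le_max_left _ _))
    (fun t => (hD t).trans (by gcongr; exact le_max_right _ _)) (by simpa using hθ)

end PhragmenLindelof

section Rays

variable {α : ℝ}

/-- The restriction of the Frobenius solution to the ray `{x exp s | x > 0}`, as a function
of `x`; its values for `x ≤ 0` are meaningless. -/
noncomputable def raySolution (α : ℝ) (μ s : ℂ) (x : ℝ) : ℂ := logSolution α μ (Real.log x + s)

/-- The derivative of `raySolution` on `(0, ∞)`. -/
noncomputable def raySolutionDeriv (α : ℝ) (μ s : ℂ) (x : ℝ) : ℂ :=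
  logSolutionDeriv α μ (Real.log x + s) / x

lemma cexp_mul_log_add {x : ℝ} (hx : 0 < x) (a : ℝ) (s : ℂ) :
    Complex.exp (a * (Real.log x + s)) = (x ^ a : ℝ) * Complex.exp (a * s) := by
  rw [mul_add, Complex.exp_add, Real.rpow_def_of_pos hx]
  push_cast
  ring_nf

lemma isSchrodingerSolution_raySolution (hα : 0 ≤ α) (μ s : ℂ) :
    IsSchrodingerSolution
      (powerPotential α (Complex.exp ((α + 2) * s)) (μ * Complex.exp (2 * s)))
      (raySolution α μ s) (raySolutionDeriv α μ s) := by
  have hlog {x : ℝ} (hx : 0 < x) : HasDerivAt (fun x : ℝ => (Real.log x : ℂ) + s) (x : ℂ)⁻¹ x := by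
    simpa using (Real.hasDerivAt_log hx.ne').ofReal_comp.add_const s
  refine ⟨fun x hx => (hasDerivAt_logSolution hα μ _).comp x (hlog hx), fun x hx => ?_⟩
  have hx' : (x : ℂ) ≠ 0 := Complex.ofReal_ne_zero.2 hx.ne'
  have hpow₁ := cexp_mul_log_add hx (α + 2) s
  have hpow₂ := cexp_mul_log_add hx 2 s
  rw [Real.rpow_add hx, Real.rpow_two] at hpow₁
  rw [Real.rpow_two] at hpow₂
  push_cast at hpow₁ hpow₂
  convert! ((hasDerivAt_logSolutionDeriv hα μ _).comp x (hlog hx)).div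
    (hasDerivAt_id x).ofReal_comp hx' using 1
  rw [hpow₁, hpow₂]
  simp only [powerPotential, raySolution, id, Function.comp_apply, Complex.ofReal_one]
  field_simp
  ring

lemma tendsto_comp_log_div {F : ℂ → ℂ} {s : ℂ}
    (hF : Tendsto (fun x : ℝ => F (x + s) * Complex.exp (-(x + s))) atBot (𝓝 1)) :
    Tendsto (fun x : ℝ => F (Real.log x + s) / x) (𝓝[>] 0) (𝓝 (Complex.exp s)) := by
  have hlim := (hF.comp Real.tendsto_log_nhdsGT_zero).mul_const (Complex.exp s)
  rw [one_mul] at hlim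
  refine hlim.congr' ?_
  filter_upwards [self_mem_nhdsWithin] with x hx
  rw [Function.comp_apply, neg_add, Complex.exp_add, mul_assoc, mul_assoc, ← Complex.exp_add,
    neg_add_cancel, Complex.exp_zero, mul_one, Complex.exp_neg, ← Complex.ofReal_exp,
    Real.exp_log hx, div_eq_mul_inv]

lemma tendsto_raySolutionDeriv (hα : 0 ≤ α) (μ s : ℂ) :
    Tendsto (raySolutionDeriv α μ s) (𝓝[>] 0) (𝓝 (Complex.exp s)) :=
  tendsto_comp_log_div (tendsto_logSolutionDeriv_mul_exp_neg hα μ s)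

lemma tendsto_raySolution (hα : 0 ≤ α) (μ s : ℂ) :
    Tendsto (raySolution α μ s) (𝓝[>] 0) (𝓝 0) := by
  have hx : Tendsto (fun x : ℝ => (x : ℂ)) (𝓝[>] 0) (𝓝 0) :=
    (Complex.continuous_ofReal.tendsto' 0 0 Complex.ofReal_zero).mono_left nhdsWithin_le_nhds
  have hlim := (tendsto_comp_log_div (tendsto_logSolution_mul_exp_neg hα μ s)).mul hx
  rw [mul_zero] at hlim
  refine hlim.congr' ?_
  filter_upwards [self_mem_nhdsWithin] with x hx
  exact div_mul_cancel₀ _ (Complex.ofReal_ne_zero.2 (ne_of_gt hx))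

/-- Square integrability of the Frobenius solution along the ray through `exp s`. -/
def IsSquareIntegrableRay (α : ℝ) (μ s : ℂ) : Prop :=
  IntegrableOn (fun x => ‖raySolution α μ s x‖ ^ 2) (Ioi 0)

lemma isEigenvalue_iff_isSquareIntegrableRay (hα : 0 ≤ α) (μ s : ℂ) :
    IsEigenvalue α (Complex.exp ((α + 2) * s)) (μ * Complex.exp (2 * s)) ↔
      IsSquareIntegrableRay α μ s :=
  isEigenvalue_iff_integrableOn hα (isSchrodingerSolution_raySolution hα μ s)
    (tendsto_raySolution hα μ s) (tendsto_raySolutionDeriv hα μ s) (Complex.exp_ne_zero s)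

lemma isSquareIntegrableRay_im_mul_I_iff {μ s : ℂ} :
    IsSquareIntegrableRay α μ (s.im * Complex.I) ↔ IsSquareIntegrableRay α μ s := by
  have hscale := integrableOn_Ioi_comp_mul_left_iff
    (fun x => ‖raySolution α μ (s.im * Complex.I) x‖ ^ 2) 0 (Real.exp_pos s.re)
  rw [mul_zero] at hscale
  rw [IsSquareIntegrableRay, IsSquareIntegrableRay, ← hscale]
  refine integrableOn_congr_fun (fun x hx => ?_) measurableSet_Ioi
  simp only [raySolution, Real.log_mul (Real.exp_pos _).ne' (ne_of_gt hx), Real.log_exp]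
  congr 3
  conv_rhs => rw [← Complex.re_add_im s]
  push_cast
  ring

lemma IsSquareIntegrableRay.isBigO_exp_neg (hα : 0 < α) {μ : ℂ} {θ k : ℝ} (hk : 0 < k)
    (hθ : k < Real.cos ((α / 2 + 1) * θ)) (h : IsSquareIntegrableRay α μ (θ * Complex.I)) :
    (fun t : ℝ => ‖logSolution α μ (t + θ * Complex.I)‖) =O[atTop]
      fun t => Real.exp (-(k / (α / 2 + 1) * Real.exp ((α / 2 + 1) * t))) := by
  set ρ := α / 2 + 1 with hρ
  set e : ℂ := Complex.exp ((-(ρ * θ) : ℝ) * Complex.I) with he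
  have hec : e * Complex.exp ((α + 2) * (θ * Complex.I)) =
      Complex.exp ((ρ * θ : ℝ) * Complex.I) := by
    rw [he, ← Complex.exp_add]
    congr 1
    rw [hρ]
    push_cast
    ring
  have hsq := (isSchrodingerSolution_raySolution hα.le μ (θ * Complex.I)).isBigO_exp_neg_rpow
    hα hk (e := e) (Complex.norm_exp_ofReal_mul_I _).le
    (by rw [he, Complex.exp_ofReal_mul_I_re, Real.cos_neg]; exact hθ.le)
    (by rw [hec, Complex.exp_ofReal_mul_I_re]; exact hθ) h
  refine IsBigO.of_pow two_ne_zero ((hsq.comp_tendsto Real.tendsto_exp_atTop).congr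
    (fun t => ?_) fun t => ?_)
  · simp [raySolution]
  · simp only [Function.comp_apply, Pi.pow_apply]
    rw [← Real.exp_nat_mul, ← Real.exp_mul, mul_comm t, hρ]
    push_cast
    ring_nf

lemma isSquareIntegrableRay_of_isBigO (hα : 0 ≤ α) {μ s : ℂ} {ε : ℝ} (hε : 0 < ε)
    (h : (fun t : ℝ => ‖logSolution α μ (t + s)‖) =O[⊤]
      fun t => Real.exp (-(ε * Real.exp ((α / 2 + 1) * t)))) :
    IsSquareIntegrableRay α μ s := by
  obtain ⟨C, hC⟩ := isBigO_top.1 h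
  simp only [norm_norm, Real.norm_of_nonneg (Real.exp_pos _).le] at hC
  have hint := (integrableOn_rpow_mul_exp_neg_mul_rpow (p := α / 2 + 1) (s := 0) (b := 2 * ε)
    (by norm_num) (by positivity) (by positivity)).const_mul (C ^ 2)
  refine hint.mono' ?_ ((ae_restrict_iff' measurableSet_Ioi).2 (ae_of_all _ fun x hx => ?_))
  · exact ((isSchrodingerSolution_raySolution hα μ s).continuousOn.norm.pow
      2).aestronglyMeasurable measurableSet_Ioi
  · rw [Real.norm_of_nonneg (sq_nonneg _), Real.rpow_zero, one_mul]
    refine (pow_le_pow_left₀ (norm_nonneg _) (hC (Real.log x)) 2).trans_eq ?_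
    rw [mul_pow, ← Real.exp_nat_mul, Real.rpow_def_of_pos hx, mul_comm (Real.log x)]
    push_cast
    ring_nf

lemma exists_pos_forall_mul_cos_sub_mul_sin_pos {ε : ℝ} (hε : 0 < ε) (K ρ : ℝ) :
    ∃ δ > 0, ∀ t, |t| ≤ δ → 0 < ε * Real.cos (ρ * t) - K * Real.sin (ρ * t) := by
  have hlim : Tendsto (fun t => ε * Real.cos (ρ * t) - K * Real.sin (ρ * t)) (𝓝 0) (𝓝 ε) :=
    Continuous.tendsto' (by fun_prop) 0 ε (by simp)
  obtain ⟨δ, hδ, hball⟩ :=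
    Metric.nhds_basis_closedBall.eventually_iff.1 (hlim.eventually_const_lt hε)
  exact ⟨δ, hδ, fun t ht => hball (by simpa using ht)⟩

lemma exists_forall_isSquareIntegrableRay_of_abs_sub_le (hα : 0 < α) (μ : ℂ) {k : ℝ}
    (hk : 0 < k) :
    ∃ δ > 0, ∀ θ₀ θ : ℝ, k < Real.cos ((α / 2 + 1) * θ₀) → |θ - θ₀| ≤ δ →
      IsSquareIntegrableRay α μ (θ₀ * Complex.I) → IsSquareIntegrableRay α μ (θ * Complex.I) := by
  set ρ := α / 2 + 1
  have hρ : 0 < ρ := by positivity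
  obtain ⟨δ, hδ, hpos⟩ :=
    exists_pos_forall_mul_cos_sub_mul_sin_pos (div_pos hk hρ) (3 + 2 * √‖μ‖) ρ
  refine ⟨min δ (Real.pi / (2 * ρ)), by positivity, fun θ₀ θ hθ₀ hθ h => ?_⟩
  have hdiff : Differentiable ℂ fun ζ => logSolution α μ (ζ + θ₀ * Complex.I) := fun ζ =>
    ((hasDerivAt_logSolution hα.le μ _).comp_add_const ζ _).differentiableAt
  have hdecay := isBigO_exp_neg_of_isBigO_exp_neg (K := 3 + 2 * √‖μ‖) hdiff hρ (by positivity)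
    (by positivity) (fun ζ => by simpa using norm_logSolution_le hα.le μ (ζ + θ₀ * Complex.I))
    (h.isBigO_exp_neg hα hk hθ₀) (hθ.trans (min_le_right _ _))
  refine isSquareIntegrableRay_of_isBigO hα.le
    (hpos |θ - θ₀| (by rw [abs_abs]; exact hθ.trans (min_le_left _ _))) ?_
  simpa only [Complex.ofReal_sub, sub_mul, add_assoc, sub_add_cancel] using hdecay

lemma eventually_isSquareIntegrableRay_iff (hα : 0 < α) (μ : ℂ) {θ₀ : ℝ}
    (hθ₀ : 0 < Real.cos ((α / 2 + 1) * θ₀)) :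
    ∀ᶠ θ : ℝ in 𝓝 θ₀, IsSquareIntegrableRay α μ (θ₀ * Complex.I) ↔
      IsSquareIntegrableRay α μ (θ * Complex.I) := by
  obtain ⟨k, hk, hkθ₀⟩ := exists_between hθ₀
  obtain ⟨δ, hδ, hpropagate⟩ := exists_forall_isSquareIntegrableRay_of_abs_sub_le hα μ hk
  have hcos : ∀ᶠ θ in 𝓝 θ₀, k < Real.cos ((α / 2 + 1) * θ) :=
    (Continuous.tendsto (by fun_prop) θ₀).eventually_const_lt hkθ₀
  filter_upwards [hcos, Metric.closedBall_mem_nhds θ₀ hδ] with θ hkθ hθ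
  rw [mem_closedBall_iff_norm, Real.norm_eq_abs] at hθ
  exact ⟨hpropagate θ₀ θ hkθ₀ hθ, hpropagate θ θ₀ hkθ (by rwa [abs_sub_comm])⟩

lemma isSquareIntegrableRay_iff_zero (hα : 0 < α) (μ : ℂ) {s : ℂ}
    (hs : (α + 2) * |s.im| < Real.pi) :
    IsSquareIntegrableRay α μ s ↔ IsSquareIntegrableRay α μ 0 := by
  have hα2 : 0 < α + 2 := by positivity
  have hmem {θ : ℝ} : θ ∈ Ioo (-(Real.pi / (α + 2))) (Real.pi / (α + 2)) ↔
      (α + 2) * |θ| < Real.pi := by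
    rw [mem_Ioo, ← abs_lt, lt_div_iff₀' hα2]
  have hcos {θ : ℝ} (hθ : (α + 2) * |θ| < Real.pi) : 0 < Real.cos ((α / 2 + 1) * θ) := by
    refine Real.cos_pos_of_mem_Ioo (abs_lt.1 ?_)
    rw [abs_mul, abs_of_pos (by positivity)]
    linarith
  have hzero := isPreconnected_Ioo.induction₂'
    (fun θ θ' : ℝ => IsSquareIntegrableRay α μ (θ * Complex.I) ↔
      IsSquareIntegrableRay α μ (θ' * Complex.I))
    (fun θ hθ => ((eventually_isSquareIntegrableRay_iff hα μ (hcos (hmem.1 hθ))).mono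
      fun _ h => ⟨h, h.symm⟩).filter_mono nhdsWithin_le_nhds)
    (fun _ _ _ _ _ _ => Iff.trans) (hmem.2 hs) (hmem (θ := 0).2 (by simpa using Real.pi_pos))
  rwa [isSquareIntegrableRay_im_mul_I_iff, Complex.ofReal_zero, zero_mul] at hzero

end Rays

lemma isEigenvalue_mul_cexp_iff {α : ℝ} (hα : 0 < α) (μ : ℂ) {s : ℂ}
    (hs : (α + 2) * |s.im| < Real.pi) :
    IsEigenvalue α (Complex.exp ((α + 2) * s)) (μ * Complex.exp (2 * s)) ↔
      IsEigenvalue α 1 μ := by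
  have hone := isEigenvalue_iff_isSquareIntegrableRay hα.le μ 0
  rw [mul_zero, mul_zero, Complex.exp_zero, mul_one] at hone
  rw [isEigenvalue_iff_isSquareIntegrableRay hα.le, isSquareIntegrableRay_iff_zero hα μ hs, hone]

lemma isEigenvalue_iff_isEigenvalue_one {α : ℝ} (hα : 0 < α) {c : ℂ} (hc : c ≠ 0)
    (harg : |c.arg| < Real.pi) (lam : ℂ) :
    IsEigenvalue α c lam ↔ IsEigenvalue α 1 (c ^ (-(2 : ℂ) / ((α : ℂ) + 2)) * lam) := by
  have hα2 : (α : ℂ) + 2 ≠ 0 := by exact_mod_cast (by positivity : α + 2 ≠ 0)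
  set s := Complex.log c / (α + 2) with hs
  have hexp : Complex.exp ((α + 2) * s) = c := by
    rw [hs, mul_div_cancel₀ _ hα2, Complex.exp_log hc]
  have hlam : c ^ (-(2 : ℂ) / (α + 2)) * lam * Complex.exp (2 * s) = lam := by
    rw [Complex.cpow_def_of_ne_zero hc, mul_right_comm, ← Complex.exp_add, hs, neg_div, mul_neg,
      mul_div_left_comm, neg_add_cancel, Complex.exp_zero, one_mul]
  have him : (α + 2) * s.im = c.arg := by
    rw [← Complex.log_im, ← mul_div_cancel₀ (Complex.log c) hα2]
    simp [← hs]
  have hsector : (α + 2) * |s.im| < Real.pi := by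
    rwa [← abs_of_pos (by positivity : 0 < α + 2), ← abs_mul, him]
  rw [← isEigenvalue_mul_cexp_iff hα _ hsector, hexp, hlam]

/-- `λ` is an eigenvalue of `𝓛_{c,α}` iff `c^{−2/(α+2)}·λ` is an eigenvalue
of `𝓛_{1,α}` (principal branch power); every eigenvalue of `𝓛_{1,α}` is a positive real;
consequently every eigenvalue of `𝓛_{c,α}` has the form `c^{2/(α+2)}·τ` with `τ > 0`. -/
theorem stmt4 (α : ℝ) (hα : 0 < α) (c : ℂ) (hc : c ≠ 0) (harg : |c.arg| < Real.pi) :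
    (∀ lam : ℂ,
      IsEigenvalue α c lam ↔ IsEigenvalue α 1 (c ^ (-(2 : ℂ) / ((α : ℂ) + 2)) * lam)) ∧
    (∀ τ : ℂ, IsEigenvalue α 1 τ → ∃ r : ℝ, 0 < r ∧ τ = (r : ℂ)) ∧
    (∀ lam : ℂ, IsEigenvalue α c lam →
      ∃ τ : ℝ, 0 < τ ∧ lam = c ^ ((2 : ℂ) / ((α : ℂ) + 2)) * (τ : ℂ)) := by
  have hscale := isEigenvalue_iff_isEigenvalue_one hα hc harg
  refine ⟨hscale, fun τ hτ => hτ.exists_pos_eq_ofReal hα, fun lam hlam => ?_⟩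
  obtain ⟨τ, hτ, hlam_eq⟩ := ((hscale lam).1 hlam).exists_pos_eq_ofReal hα
  refine ⟨τ, hτ, ?_⟩
  rw [← hlam_eq, ← mul_assoc, ← Complex.cpow_add _ _ hc, ← add_div, add_neg_cancel, zero_div,
    Complex.cpow_zero, one_mul]
end
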